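/- (Time-degenerate coercivity estimate.) Let 0 < s < 1 and let the collision kernel b satisfy b(cos θ)·θ^{2+2s} → K as θ → 0+ for some K > 0. Let α ∈ (2s, 2], let F₀ be a Borel probability measure on ℝ³ which is not a single Dirac mass, with characteristic function ψ₀ ∈ 𝒦^α, and let ψ be a solution of the Fourier-transformed (Bobylev) homogeneous Boltzmann Cauchy problem with initial datum ψ₀. Then there exist T > 0 and C > 0 such that for every t ∈ [0, T] and every measurable h : ℝ³ → ℂ with ∫_{ℝ³} (1+|ξ|²)^s |h(ξ)|² dξ < ∞, one has t ∫_{ℝ³} (1+|ξ|²)^s |h(ξ)|² dξ ≤ C ( ∫_{ℝ³} ( ∫_{S²} b(ξ·σ/|ξ|) (1 − |ψ(t, ξ⁻)|) dσ ) |h(ξ)|² dξ + ∫_{ℝ³} |h(ξ)|² dξ ), where ξ⁻ = (ξ − |ξ|σ)/2. -/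

import Mathlib

noncomputable section

open MeasureTheory Real Filter Metric Set
open scoped RealInnerProductSpace Topology

/-- ℝ³ as a Euclidean space. -/
abbrev E3 : Type := EuclideanSpace ℝ (Fin 3)

/-- The surface measure on the unit sphere S² ⊂ ℝ³. -/
def sphμ : Measure (sphere (0 : E3) 1) := (volume : Measure E3).toSphere

/-- The characteristic function (Fourier transform) of a Borel measure on ℝ³,
`ψ(ξ) = ∫ e^{-i v·ξ} dΨ(v)`. -/
def charFn (Ψ : Measure E3) (ξ : E3) : ℂ :=
  ∫ v, Complex.exp (-(Complex.I * (⟪v, ξ⟫ : ℂ))) ∂Ψ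

/-- `ψ` is a characteristic function of some Borel probability measure on ℝ³. -/
def IsCharFn (ψ : E3 → ℂ) : Prop :=
  ∃ Ψ : Measure E3, IsProbabilityMeasure Ψ ∧ ψ = charFn Ψ

/-- Finiteness of `‖φ - 1‖_α`, i.e. the quantitative part of membership in `𝒦^α`. -/
def KBdd (α : ℝ) (φ : E3 → ℂ) : Prop :=
  ∃ C : ℝ, ∀ ξ : E3, ξ ≠ 0 → ‖φ ξ - 1‖ ≤ C * ‖ξ‖ ^ α

/-- Membership in the space `𝒦^α`. -/
def memK (α : ℝ) (φ : E3 → ℂ) : Prop := IsCharFn φ ∧ KBdd α φ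

/-- The distance `‖φ - φ'‖_α = sup_{ξ ≠ 0} |φ(ξ) - φ'(ξ)|/|ξ|^α` on `𝒦^α`. -/
def Kdist (α : ℝ) (φ φ' : E3 → ℂ) : ℝ :=
  ⨆ ξ : {ξ : E3 // ξ ≠ 0}, ‖φ ξ.1 - φ' ξ.1‖ / ‖(ξ.1 : E3)‖ ^ α

/-- `ξ⁺ = ξ/2 + (|ξ|/2)σ`. -/
def xiPlus (ξ : E3) (σ : sphere (0 : E3) 1) : E3 := (1/2 : ℝ) • ξ + (‖ξ‖ / 2) • (σ : E3)

/-- `ξ⁻ = ξ/2 - (|ξ|/2)σ`. -/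
def xiMinus (ξ : E3) (σ : sphere (0 : E3) 1) : E3 := (1/2 : ℝ) • ξ - (‖ξ‖ / 2) • (σ : E3)

/-- The Bobylev collision integrand at time `t`, frequency `ξ`, direction `σ`. -/
def bobylevIntegrand (b : ℝ → ℝ) (ψ : ℝ → E3 → ℂ) (t : ℝ) (ξ : E3)
    (σ : sphere (0 : E3) 1) : ℂ :=
  (b (⟪ξ, (σ : E3)⟫ / ‖ξ‖) : ℂ) *
    (ψ t (xiPlus ξ σ) * ψ t (xiMinus ξ σ) - ψ t ξ)

/-- `ψ : [0,∞) × ℝ³ → ℂ` is a solution of the Fourier-transformed (Bobylev)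
homogeneous Boltzmann Cauchy problem with collision kernel `b` and initial datum `ψ₀`. -/
structure IsBobylevSolution (b : ℝ → ℝ) (ψ : ℝ → E3 → ℂ) (ψ₀ : E3 → ℂ) : Prop where
  cont : ContinuousOn (fun p : ℝ × E3 => ψ p.1 p.2) (Set.Ici 0 ×ˢ Set.univ)
  init : ψ 0 = ψ₀
  isCharFn : ∀ t ≥ 0, IsCharFn (ψ t)
  integrable : ∀ t ≥ 0, ∀ ξ : E3, Integrable (bobylevIntegrand b ψ t ξ) sphμ
  eq : ∀ t ≥ 0, ∀ ξ : E3, HasDerivWithinAt (fun τ => ψ τ ξ)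
      (∫ σ, bobylevIntegrand b ψ t ξ σ ∂sphμ) (Set.Ici 0) t

/-- Continuity of `t ↦ ψ(t,·)` from `[0,∞)` into the metric space `(𝒦^α, ‖·‖_α)`. -/
def KContinuous (α : ℝ) (ψ : ℝ → E3 → ℂ) : Prop :=
  ∀ t₀ ∈ Set.Ici (0:ℝ), Tendsto (fun t => Kdist α (ψ t) (ψ t₀)) (𝓝[Set.Ici (0:ℝ)] t₀) (𝓝 0)

/-- The angular singularity assumption `b(cos θ) θ^{2+2s} → K` as `θ → 0+`. -/
def KernelSingular (b : ℝ → ℝ) (s K : ℝ) : Prop :=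
  Tendsto (fun θ : ℝ => b (Real.cos θ) * θ ^ (2 + 2*s)) (𝓝[>] 0) (𝓝 K)

/-!
For the characteristic function `φ` of a probability measure, the defect `1 - |φ|²` is the variance
of a character, so up to a factor `2` it satisfies the triangle inequality. If `f` is a unit vector
orthogonal to `ξ`, the reflection in `fᗮ` preserves the collision angle and moves `ξ⁻` by a multiple
of `f`; hence the defect of `ψ t` on a segment of the line through `f` bounds the dissipation at `ξ`
from below by a multiple of `|ξ|^{2s}`.

Let `V` be the largest subspace on which `|ψ₀| = 1`, a proper subspace since `F₀` is not a Dirac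
mass. Off `V` every ray carries positive defect at time `0`. On `V` the initial defect vanishes, but
the equation produces it at a linear rate, strictly positive at some point of each ray. A Steinhaus
argument shows that near the origin of `V` the defect is at most `ε t`, so by the quasi-triangle
inequality linear growth at a point of `V` propagates to a neighbourhood in `V`. One of `V` and `Vᗮ`
has dimension at least two and therefore meets every `ξᗮ`, and compactness of its unit sphere makes
the bounds uniform in `ξ`.
-/

section Defect

variable {E : Type*}

/-- The defect `1 - |φ|²`: for the characteristic function `φ` of a probability measure `μ`,
`defect φ x` is the variance of the character `v ↦ exp (i ⟪v, x⟫)` under `μ`. -/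
def defect (φ : E → ℂ) (x : E) : ℝ := 1 - ‖φ x‖ ^ 2

lemma defect_nonneg {φ : E → ℂ} {x : E} (h : ‖φ x‖ ≤ 1) : 0 ≤ defect φ x := by
  unfold defect
  nlinarith [norm_nonneg (φ x)]

lemma defect_le_two_mul (φ : E → ℂ) (x : E) : defect φ x ≤ 2 * (1 - ‖φ x‖) := by
  unfold defect
  nlinarith [sq_nonneg (1 - ‖φ x‖)]

lemma one_sub_norm_le_defect {φ : E → ℂ} {x : E} (h : ‖φ x‖ ≤ 1) : 1 - ‖φ x‖ ≤ defect φ x := by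
  unfold defect
  nlinarith [norm_nonneg (φ x)]

lemma norm_eq_one_of_defect_eq_zero {φ : E → ℂ} {x : E} (h : defect φ x = 0) : ‖φ x‖ = 1 := by
  unfold defect at h
  nlinarith [norm_nonneg (φ x)]

lemma continuous_defect [TopologicalSpace E] {φ : E → ℂ} (hφ : Continuous φ) :
    Continuous (defect φ) := by
  unfold defect
  fun_prop

end Defect

lemma integral_norm_sub_const_sq {Ω H : Type*} [MeasurableSpace Ω] {P : Measure Ω}
    [IsProbabilityMeasure P] [NormedAddCommGroup H] [InnerProductSpace ℝ H] [CompleteSpace H]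
    {X : Ω → H} (hX : MemLp X 2 P) (c : H) :
    ∫ ω, ‖X ω - c‖ ^ 2 ∂P
      = ∫ ω, ‖X ω‖ ^ 2 ∂P - ‖∫ ω, X ω ∂P‖ ^ 2 + ‖∫ ω, X ω ∂P - c‖ ^ 2 := by
  have hX1 : Integrable X P := hX.integrable one_le_two
  have hinner2 : Integrable (fun ω => 2 * ⟪c, X ω⟫) P := (hX1.const_inner c).const_mul 2
  have hsq : Integrable (fun ω => ‖X ω‖ ^ 2) P := hX.integrable_norm_pow two_ne_zero
  simp_rw [norm_sub_sq_real, real_inner_comm c]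
  rw [integral_add (f := fun ω => ‖X ω‖ ^ 2 - 2 * ⟪c, X ω⟫) (hsq.sub hinner2)
    (integrable_const _), integral_sub hsq hinner2, integral_const_mul, integral_inner hX1,
    integral_const, probReal_univ, one_smul]
  ring

section CharFun

open BoundedContinuousFunction (innerProbChar innerProbChar_apply)

variable {E : Type*} [NormedAddCommGroup E] [InnerProductSpace ℝ E]

lemma norm_innerProbChar (x v : E) : ‖innerProbChar x v‖ = 1 := by
  rw [innerProbChar_apply]
  exact Complex.norm_exp_ofReal_mul_I _

lemma innerProbChar_add (x y v : E) : innerProbChar (x + y) v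
    = innerProbChar x v * innerProbChar y v := by
  simp only [innerProbChar_apply, inner_add_right, Complex.ofReal_add,
    add_mul, Complex.exp_add]

variable [MeasurableSpace E] {μ : Measure E} {x : E}

lemma defect_charFun_neg : defect (charFun μ) (-x) = defect (charFun μ) x := by
  simp only [defect, charFun_neg, RCLike.norm_conj]

variable [IsProbabilityMeasure μ]

lemma defect_charFun_nonneg : 0 ≤ defect (charFun μ) x :=
  defect_nonneg (norm_charFun_le_one x)

lemma defect_charFun_zero : defect (charFun μ) 0 = 0 := by
  simp [defect]

variable [BorelSpace E]

lemma memLp_innerProbChar (x : E) (p : ENNReal) :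
    MemLp (innerProbChar x) p μ :=
  MemLp.of_bound (innerProbChar x).continuous.aestronglyMeasurable 1
    (ae_of_all _ fun v => (norm_innerProbChar x v).le)

lemma integral_norm_innerProbChar_sub_sq (x : E) (c : ℂ) :
    ∫ v, ‖innerProbChar x v - c‖ ^ 2 ∂μ
      = defect (charFun μ) x + ‖charFun μ x - c‖ ^ 2 := by
  rw [integral_norm_sub_const_sq (memLp_innerProbChar x 2), ← charFun_eq_integral_innerProbChar]
  simp [norm_innerProbChar, defect]

lemma integrable_norm_innerProbChar_sub_sq (x : E) (c : ℂ) :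
    Integrable (fun v => ‖innerProbChar x v - c‖ ^ 2) μ :=
  ((memLp_innerProbChar x 2).sub (memLp_const c)).integrable_norm_pow two_ne_zero

lemma defect_charFun_eq_integral (x : E) : defect (charFun μ) x
    = ∫ v, ‖innerProbChar x v - charFun μ x‖ ^ 2 ∂μ := by
  simp [integral_norm_innerProbChar_sub_sq]

lemma defect_charFun_add_le (x y : E) :
    defect (charFun μ) (x + y) ≤ 2 * defect (charFun μ) x + 2 * defect (charFun μ) y := by
  set e := fun z v : E => innerProbChar z v with he
  set c := charFun μ x
  set d := charFun μ y
  have hpointwise (v : E) : ‖e (x + y) v - c * d‖ ^ 2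
      ≤ 2 * ‖e x v - c‖ ^ 2 + 2 * ‖e y v - d‖ ^ 2 := by
    have hsplit : e (x + y) v - c * d = (e x v - c) * e y v + c * (e y v - d) := by
      simp only [he, innerProbChar_add]; ring
    have htri : ‖e (x + y) v - c * d‖ ≤ ‖e x v - c‖ + ‖e y v - d‖ := by
      rw [hsplit]
      refine (norm_add_le _ _).trans (add_le_add ?_ ?_)
      · rw [norm_mul, norm_innerProbChar, mul_one]
      · rw [norm_mul]
        exact mul_le_of_le_one_left (norm_nonneg _) (norm_charFun_le_one x)
    nlinarith [norm_nonneg (e (x + y) v - c * d), sq_nonneg (‖e x v - c‖ - ‖e y v - d‖)]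
  calc defect (charFun μ) (x + y) ≤ ∫ v, ‖e (x + y) v - c * d‖ ^ 2 ∂μ := by
        rw [integral_norm_innerProbChar_sub_sq]
        exact le_add_of_nonneg_right (sq_nonneg _)
    _ ≤ ∫ v, (2 * ‖e x v - c‖ ^ 2 + 2 * ‖e y v - d‖ ^ 2) ∂μ :=
        integral_mono (integrable_norm_innerProbChar_sub_sq _ _)
          (((integrable_norm_innerProbChar_sub_sq _ _).const_mul 2).add
            ((integrable_norm_innerProbChar_sub_sq _ _).const_mul 2)) hpointwise
    _ = 2 * defect (charFun μ) x + 2 * defect (charFun μ) y := by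
        rw [integral_add ((integrable_norm_innerProbChar_sub_sq _ _).const_mul 2)
          ((integrable_norm_innerProbChar_sub_sq _ _).const_mul 2), integral_const_mul,
          integral_const_mul, defect_charFun_eq_integral x, defect_charFun_eq_integral y]

lemma defect_charFun_sub_le (x y : E) :
    defect (charFun μ) (x - y) ≤ 2 * defect (charFun μ) x + 2 * defect (charFun μ) y := by
  simpa only [sub_eq_add_neg, defect_charFun_neg] using defect_charFun_add_le (μ := μ) x (-y)

lemma ofReal_defect_charFun_sub_le (x y : E) : ENNReal.ofReal (defect (charFun μ) (x - y))
    ≤ 2 * ENNReal.ofReal (defect (charFun μ) x) + 2 * ENNReal.ofReal (defect (charFun μ) y) := by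
  refine (ENNReal.ofReal_le_ofReal (defect_charFun_sub_le x y)).trans_eq ?_
  rw [ENNReal.ofReal_add (mul_nonneg two_pos.le defect_charFun_nonneg)
    (mul_nonneg two_pos.le defect_charFun_nonneg), ENNReal.ofReal_mul two_pos.le,
    ENNReal.ofReal_mul two_pos.le, ENNReal.ofReal_ofNat]

lemma innerProbChar_ae_eq_charFun (hx : defect (charFun μ) x = 0) :
    ∀ᵐ v ∂μ, innerProbChar x v = charFun μ x := by
  rw [defect_charFun_eq_integral, integral_eq_zero_iff_of_nonneg (fun v => sq_nonneg _)
    (integrable_norm_innerProbChar_sub_sq _ _)] at hx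
  filter_upwards [hx] with v hv
  simpa [sub_eq_zero] using hv

lemma charFun_add_of_defect_eq_zero (hx : defect (charFun μ) x = 0) (y : E) :
    charFun μ (x + y) = charFun μ x * charFun μ y := by
  rw [charFun_eq_integral_innerProbChar (t := x + y), charFun_eq_integral_innerProbChar (t := y),
    ← integral_const_mul]
  refine integral_congr_ae ?_
  filter_upwards [innerProbChar_ae_eq_charFun hx] with v hv
  rw [innerProbChar_add, hv]

lemma defect_charFun_add_of_defect_eq_zero (hx : defect (charFun μ) x = 0) (y : E) :
    defect (charFun μ) (x + y) = defect (charFun μ) y := by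
  rw [defect, charFun_add_of_defect_eq_zero hx, norm_mul, norm_eq_one_of_defect_eq_zero hx,
    one_mul, defect]

-- The symmetrization of `μ`, the law of `v - w` under `μ × μ`, has characteristic function
-- `‖charFun μ‖ ^ 2 = 1`, so it is the Dirac mass at `0`.
lemma exists_measure_singleton_eq_one [SecondCountableTopology E] [CompleteSpace E]
    (h : ∀ x, defect (charFun μ) x = 0) : ∃ v₀, μ {v₀} = 1 := by
  have hneg : Measurable fun v : E => (-1 : ℝ) • v := measurable_const_smul _
  have : IsProbabilityMeasure (μ.map fun v => (-1 : ℝ) • v) :=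
    Measure.isProbabilityMeasure_map hneg.aemeasurable
  have hsymm : μ.conv (μ.map fun v => (-1 : ℝ) • v) = Measure.dirac 0 := by
    refine Measure.ext_of_charFun (funext fun x => ?_)
    rw [charFun_conv, charFun_map_smul, neg_one_smul, charFun_neg, Complex.mul_conj',
      norm_eq_one_of_defect_eq_zero (h x), charFun_dirac]
    simp
  have hsum : ∀ᵐ z ∂μ.conv (μ.map fun v => (-1 : ℝ) • v), z = 0 := by
    rw [hsymm, ae_dirac_eq]
    exact rfl
  obtain ⟨v₀, hv₀⟩ :=
    (Measure.ae_ae_of_ae_prod (ae_of_ae_map measurable_add.aemeasurable hsum)).exists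
  refine ⟨v₀, (prob_compl_eq_zero_iff (measurableSet_singleton v₀)).1 ?_⟩
  filter_upwards [ae_of_ae_map hneg.aemeasurable hv₀] with w hw
  rw [neg_one_smul, ← sub_eq_add_neg, sub_eq_zero] at hw
  exact hw.symm

/-- The directions along which a characteristic function has modulus one: the largest subspace
contained in `{x | ‖charFun μ x‖ = 1}`. -/
def unimodularSubspace (μ : Measure E) [IsProbabilityMeasure μ] : Submodule ℝ E where
  carrier := {x | ∀ a : ℝ, defect (charFun μ) (a • x) = 0}
  zero_mem' a := by rw [smul_zero, defect_charFun_zero]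
  add_mem' {x y} hx hy a := by
    rw [smul_add, defect_charFun_add_of_defect_eq_zero (hx a), hy a]
  smul_mem' r x hx a := by simpa only [smul_smul] using hx (a * r)

lemma mem_unimodularSubspace :
    x ∈ unimodularSubspace μ ↔ ∀ a : ℝ, defect (charFun μ) (a • x) = 0 := Iff.rfl

lemma defect_eq_zero_of_mem_unimodularSubspace (hx : x ∈ unimodularSubspace μ) :
    defect (charFun μ) x = 0 := by
  simpa using hx 1

lemma exists_defect_smul_pos (hx : x ∉ unimodularSubspace μ) :
    ∃ a > (0 : ℝ), 0 < defect (charFun μ) (a • x) := by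
  simp only [mem_unimodularSubspace, not_forall] at hx
  obtain ⟨a, ha⟩ := hx
  have hpos : 0 < defect (charFun μ) (a • x) := defect_charFun_nonneg.lt_of_ne' ha
  rcases lt_trichotomy a 0 with hneg | rfl | hapos
  · exact ⟨-a, neg_pos.2 hneg, by rwa [neg_smul, defect_charFun_neg]⟩
  · simp [defect_charFun_zero] at hpos
  · exact ⟨a, hapos, hpos⟩

lemma unimodularSubspace_ne_top [SecondCountableTopology E] [CompleteSpace E]
    (h : ∀ v₀, μ {v₀} ≠ 1) : unimodularSubspace μ ≠ ⊤ := fun htop =>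
  have ⟨v₀, hv₀⟩ := exists_measure_singleton_eq_one fun x =>
    defect_eq_zero_of_mem_unimodularSubspace (htop ▸ Submodule.mem_top : x ∈ unimodularSubspace μ)
  h v₀ hv₀

end CharFun

lemma charFn_eq_charFun_neg (Ψ : Measure E3) (ξ : E3) : charFn Ψ ξ = charFun Ψ (-ξ) := by
  simp only [charFn, charFun_apply, inner_neg_right]
  refine integral_congr_ae (ae_of_all _ fun v => congrArg _ ?_)
  push_cast
  ring

-- The sign convention of `charFn` is absorbed by reflecting the measure.
lemma charFn_eq_charFun_map (Ψ : Measure E3) :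
    charFn Ψ = charFun (Ψ.map fun v => (-1 : ℝ) • v) := by
  ext ξ
  rw [charFun_map_smul, neg_one_smul, charFn_eq_charFun_neg]

lemma IsCharFn.exists_charFun {φ : E3 → ℂ} (h : IsCharFn φ) :
    ∃ μ : Measure E3, IsProbabilityMeasure μ ∧ φ = charFun μ := by
  obtain ⟨Ψ, hΨ, rfl⟩ := h
  exact ⟨_, Measure.isProbabilityMeasure_map (measurable_const_smul (-1 : ℝ)).aemeasurable,
    charFn_eq_charFun_map Ψ⟩

section Sphere

variable {E : Type*} [NormedAddCommGroup E] [InnerProductSpace ℝ E]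

/-- The homeomorphism of the unit sphere induced by a linear isometry of the ambient space. -/
def sphereHomeomorph (L : E ≃ₗᵢ[ℝ] E) : sphere (0 : E) 1 ≃ₜ sphere (0 : E) 1 where
  toFun σ := ⟨L σ, by simp⟩
  invFun σ := ⟨L.symm σ, by simp⟩
  left_inv σ := by ext1; simp
  right_inv σ := by ext1; simp
  continuous_toFun := by fun_prop
  continuous_invFun := by fun_prop

@[simp]
lemma coe_sphereHomeomorph (L : E ≃ₗᵢ[ℝ] E) (σ : sphere (0 : E) 1) :
    (sphereHomeomorph L σ : E) = L σ := rfl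

open scoped Pointwise in
lemma smul_image_sphereHomeomorph_preimage (L : E ≃ₗᵢ[ℝ] E) (I : Set ℝ)
    (S : Set (sphere (0 : E) 1)) :
    I • ((↑) '' (sphereHomeomorph L ⁻¹' S) : Set E) = L ⁻¹' (I • ((↑) '' S : Set E)) := by
  ext x
  simp only [Set.mem_smul, Set.mem_image, Set.mem_preimage]
  constructor
  · rintro ⟨r, hr, _, ⟨σ, hσ, rfl⟩, rfl⟩
    exact ⟨r, hr, _, ⟨_, hσ, rfl⟩, by simp⟩
  · rintro ⟨r, hr, _, ⟨σ, hσ, rfl⟩, hx⟩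
    refine ⟨r, hr, _, ⟨(sphereHomeomorph L).symm σ, by simpa using hσ, rfl⟩, L.injective ?_⟩
    rw [← hx, L.map_smul, ← coe_sphereHomeomorph, Homeomorph.apply_symm_apply]

variable [FiniteDimensional ℝ E] [MeasurableSpace E] [BorelSpace E]

lemma measurePreserving_sphereHomeomorph (L : E ≃ₗᵢ[ℝ] E) :
    MeasurePreserving (sphereHomeomorph L) (volume : Measure E).toSphere
      (volume : Measure E).toSphere := by
  have hmeas : Measurable (sphereHomeomorph L) := (sphereHomeomorph L).continuous.measurable
  refine ⟨hmeas, Measure.ext fun S hS => ?_⟩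
  rw [Measure.map_apply hmeas hS, Measure.toSphere_apply' _ hS,
    Measure.toSphere_apply' _ (hmeas hS), smul_image_sphereHomeomorph_preimage,
    L.measurePreserving.measure_preimage_emb L.toHomeomorph.measurableEmbedding]

end Sphere

section SphericalPatch

variable {E : Type*} [NormedAddCommGroup E] [InnerProductSpace ℝ E]
  {ι : Type*} [Fintype ι]

/-- The spherical cube near the pole `B i₀`: the points of the open hemisphere centred at `B i₀`
whose other coordinates all lie in `[p / r, q / r]`. -/
def sphericalPatch (B : OrthonormalBasis ι ℝ E) (i₀ : ι) (p q r : ℝ) :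
    Set (sphere (0 : E) 1) :=
  {σ | 0 < ⟪B i₀, (σ : E)⟫ ∧ ∀ i ≠ i₀, r * ⟪B i, (σ : E)⟫ ∈ Icc p q}

lemma norm_sq_le_of_forall_abs_inner_le (B : OrthonormalBasis ι ℝ E) (i₀ : ι) {x : E} {η : ℝ}
    (h : ∀ i ≠ i₀, |⟪B i, x⟫| ≤ η) :
    ‖x‖ ^ 2 ≤ ⟪B i₀, x⟫ ^ 2 + (Fintype.card ι * η) ^ 2 := by
  classical
  have hcard : (1 : ℝ) ≤ Fintype.card ι := by
    exact_mod_cast Fintype.card_pos_iff.2 ⟨i₀⟩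
  have hrest : ∑ i ∈ Finset.univ.erase i₀, ⟪B i, x⟫ ^ 2 ≤ Fintype.card ι * η ^ 2 := by
    calc ∑ i ∈ Finset.univ.erase i₀, ⟪B i, x⟫ ^ 2
        ≤ ∑ _i ∈ Finset.univ.erase i₀, η ^ 2 := Finset.sum_le_sum fun i hi => by
          rw [← sq_abs]
          gcongr
          exact h i (Finset.ne_of_mem_erase hi)
      _ ≤ Fintype.card ι * η ^ 2 := by
          rw [Finset.sum_const, nsmul_eq_mul]
          gcongr
          exact Finset.card_le_univ _
  have hnorm : ‖x‖ ^ 2 = ⟪B i₀, x⟫ ^ 2 + ∑ i ∈ Finset.univ.erase i₀, ⟪B i, x⟫ ^ 2 := by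
    rw [Finset.add_sum_erase _ (fun i => ⟪B i, x⟫ ^ 2) (Finset.mem_univ i₀)]
    simpa using (B.sum_sq_norm_inner_right x).symm
  nlinarith [sq_nonneg η]

lemma arccos_inner_le_of_mem_sphericalPatch [Nontrivial ι] {B : OrthonormalBasis ι ℝ E} {i₀ : ι}
    {p q r : ℝ} (hp : 0 < p) (hr : 0 < r) {σ : sphere (0 : E) 1}
    (hσ : σ ∈ sphericalPatch B i₀ p q r) :
    0 < Real.arccos ⟪B i₀, (σ : E)⟫ ∧
      Real.arccos ⟪B i₀, (σ : E)⟫ ≤ 2 * (Fintype.card ι * q) / r := by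
  obtain ⟨hpole, hcoord⟩ := hσ
  set y := ⟪B i₀, (σ : E)⟫ with hy
  obtain ⟨j, hj⟩ := exists_ne i₀
  have hjpos : 0 < ⟪B j, (σ : E)⟫ := pos_of_mul_pos_right (hp.trans_le (hcoord j hj).1) hr.le
  have hq : 0 < q := hp.trans_le ((hcoord j hj).1.trans (hcoord j hj).2)
  have hlt : y < 1 := by
    classical
    have hbessel := B.orthonormal.sum_inner_products_le (x := (σ : E)) (s := {i₀, j})
    rw [Finset.sum_pair hj.symm, norm_eq_of_mem_sphere] at hbessel
    simp only [Real.norm_eq_abs, sq_abs, ← hy] at hbessel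
    nlinarith
  have hsq : 1 ≤ y ^ 2 + (Fintype.card ι * (q / r)) ^ 2 := by
    have h := norm_sq_le_of_forall_abs_inner_le B i₀ (x := (σ : E)) (η := q / r) fun i hi => by
      have hi0 : 0 < ⟪B i, (σ : E)⟫ := pos_of_mul_pos_right (hp.trans_le (hcoord i hi).1) hr.le
      rw [abs_of_pos hi0, le_div_iff₀' hr]
      exact (hcoord i hi).2
    rwa [norm_eq_of_mem_sphere, one_pow] at h
  have hsin : Real.sin (Real.arccos y) ≤ Fintype.card ι * (q / r) := by
    rw [Real.sin_arccos, Real.sqrt_le_left (by positivity)]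
    linarith
  have hpos : 0 < Real.arccos y := Real.arccos_pos.2 hlt
  refine ⟨hpos, ?_⟩
  have hjordan := Real.mul_le_sin hpos.le (Real.arccos_le_pi_div_two.2 hpole.le)
  have hhalf : 1 / 2 * Real.arccos y ≤ 2 / π * Real.arccos y := by
    gcongr ?_ * _
    rw [div_le_div_iff₀ two_pos Real.pi_pos]
    linarith [Real.pi_le_four]
  calc Real.arccos y ≤ 2 * Real.sin (Real.arccos y) := by linarith
    _ ≤ 2 * (Fintype.card ι * (q / r)) := by gcongr
    _ = 2 * (Fintype.card ι * q) / r := by ring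

lemma measurableSet_sphericalPatch [MeasurableSpace E] [BorelSpace E]
    (B : OrthonormalBasis ι ℝ E) (i₀ : ι) (p q r : ℝ) :
    MeasurableSet (sphericalPatch B i₀ p q r) := by
  have hinner (i : ι) : Measurable fun σ : sphere (0 : E) 1 => ⟪B i, (σ : E)⟫ :=
    Continuous.measurable (by fun_prop)
  simp only [sphericalPatch, ofPred_and, ofPred_forall]
  exact (hinner i₀ measurableSet_Ioi).inter
    (.iInter fun i => .iInter fun _ => (hinner i).const_mul r measurableSet_Icc)

open scoped Pointwise in
-- On the box `‖x‖` lies in `[1 / 2, 1 / 2 + 2 δ]`, so dividing by it moves the transverse interval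
-- `[(1 / 2 + 2 δ) p, q / 2]` into `[p, q]`.
lemma box_subset_smul_sphericalPatch (B : OrthonormalBasis ι ℝ E) (i₀ : ι) {p q r δ : ℝ}
    (hp : 0 < p) (hq : 0 < q) (hr : 0 < r) (hδ0 : 0 < δ) (hδ : δ ≤ 1 / 8)
    (hδr : Fintype.card ι * q ≤ δ * r) :
    {x : E | ⟪B i₀, x⟫ ∈ Icc (1 / 2) (1 / 2 + δ) ∧
      ∀ i ≠ i₀, ⟪B i, x⟫ ∈ Icc ((1 / 2 + 2 * δ) * p / r) (q / 2 / r)} ⊆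
        Ioo (0 : ℝ) 1 • ((↑) '' sphericalPatch B i₀ p q r : Set E) := by
  rintro x ⟨⟨hlow, hupp⟩, hcoord⟩
  have hge : 1 / 2 ≤ ‖x‖ := hlow.trans <| (real_inner_le_norm _ _).trans <| by
    rw [B.orthonormal.1, one_mul]
  have hpos : 0 < ‖x‖ := by linarith
  have hcoord' (i : ι) (hi : i ≠ i₀) :
      (1 / 2 + 2 * δ) * p ≤ r * ⟪B i, x⟫ ∧ r * ⟪B i, x⟫ ≤ q / 2 := by
    obtain ⟨h1, h2⟩ := hcoord i hi
    rw [div_le_iff₀' hr] at h1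
    rw [le_div_iff₀' hr] at h2
    exact ⟨h1, h2⟩
  have hle : ‖x‖ ≤ 1 / 2 + 2 * δ := by
    have h := norm_sq_le_of_forall_abs_inner_le B i₀ (x := x) (η := q / r) fun i hi => by
      obtain ⟨h1, h2⟩ := hcoord' i hi
      have h0 : 0 < r * ⟪B i, x⟫ := lt_of_lt_of_le (by positivity) h1
      rw [abs_of_pos (pos_of_mul_pos_right h0 hr.le), le_div_iff₀' hr]
      linarith
    have hsq : (Fintype.card ι * (q / r)) ^ 2 ≤ δ ^ 2 := by
      gcongr
      rwa [← mul_div_assoc, div_le_iff₀ hr]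
    nlinarith
  have hunit : ‖x‖⁻¹ • x ∈ sphere (0 : E) 1 := by
    rw [mem_sphere_zero_iff_norm, norm_smul, norm_inv, norm_norm, inv_mul_cancel₀ hpos.ne']
  refine Set.mem_smul.2 ⟨‖x‖, ⟨hpos, by linarith⟩, ‖x‖⁻¹ • x,
    ⟨⟨_, hunit⟩, ⟨?_, fun i hi => ?_⟩, rfl⟩, smul_inv_smul₀ hpos.ne' x⟩
  · rw [inner_smul_right]
    exact mul_pos (inv_pos.2 hpos) (by linarith)
  · obtain ⟨h1, h2⟩ := hcoord' i hi
    rw [inner_smul_right, mul_left_comm, inv_mul_eq_div, mem_Icc, le_div_iff₀ hpos,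
      div_le_iff₀ hpos]
    constructor <;> nlinarith

variable [FiniteDimensional ℝ E] [MeasurableSpace E] [BorelSpace E]

lemma volume_orthonormalBasis_box (B : OrthonormalBasis ι ℝ E) (l u : ι → ℝ) :
    volume {x : E | ∀ i, ⟪B i, x⟫ ∈ Icc (l i) (u i)} = ∏ i, ENNReal.ofReal (u i - l i) := by
  have hbox : {x : E | ∀ i, ⟪B i, x⟫ ∈ Icc (l i) (u i)}
      = (WithLp.ofLp ∘ B.repr) ⁻¹' Icc l u := by
    ext x
    simp only [mem_ofPred_eq, Set.mem_preimage, Set.mem_Icc, Pi.le_def, Function.comp_apply,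
      B.repr_apply_apply]
    exact forall_and
  rw [hbox, ((PiLp.volume_preserving_ofLp ι).comp B.measurePreserving_repr).measure_preimage
    measurableSet_Icc.nullMeasurableSet, Real.volume_Icc_pi]

lemma volume_orthonormalBasis_box_pole (B : OrthonormalBasis ι ℝ E) (i₀ : ι) (l₀ u₀ l u : ℝ) :
    volume {x : E | ⟪B i₀, x⟫ ∈ Icc l₀ u₀ ∧ ∀ i ≠ i₀, ⟪B i, x⟫ ∈ Icc l u}
      = ENNReal.ofReal (u₀ - l₀) * ENNReal.ofReal (u - l) ^ (Fintype.card ι - 1) := by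
  classical
  have hbox : {x : E | ⟪B i₀, x⟫ ∈ Icc l₀ u₀ ∧ ∀ i ≠ i₀, ⟪B i, x⟫ ∈ Icc l u}
      = {x : E | ∀ i, ⟪B i, x⟫ ∈ Icc (Function.update (fun _ => l) i₀ l₀ i)
          (Function.update (fun _ => u) i₀ u₀ i)} := by
    ext x
    simp only [mem_ofPred_eq, Function.update_apply]
    refine ⟨fun ⟨h₀, h⟩ i => ?_,
      fun h => ⟨by simpa using h i₀, fun i hi => by simpa [hi] using h i⟩⟩
    by_cases hi : i = i₀
    · simpa [hi] using h₀
    · simpa [hi] using h i hi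
  rw [hbox, volume_orthonormalBasis_box, ← Finset.mul_prod_erase _ _ (Finset.mem_univ i₀),
    Finset.prod_congr rfl (g := fun _ => ENNReal.ofReal (u - l)) fun i hi => by
      simp [Function.update_of_ne (Finset.ne_of_mem_erase hi)]]
  simp [Finset.card_erase_of_mem]

lemma exists_toSphere_sphericalPatch_ge {p q : ℝ} (hp : 0 < p) (hpq : p < q) :
    ∃ R ≥ (1 : ℝ), ∃ c > (0 : ℝ), ∀ (B : OrthonormalBasis ι ℝ E) (i₀ : ι), ∀ r ≥ R,
      ENNReal.ofReal (c / r ^ (Fintype.card ι - 1)) ≤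
        (volume : Measure E).toSphere (sphericalPatch B i₀ p q r) := by
  set n := Fintype.card ι
  have hq : 0 < q := hp.trans hpq
  have : 0 < q - p := sub_pos.2 hpq
  obtain ⟨δ, hδ0, hδ, hδp⟩ : ∃ δ > (0 : ℝ), δ ≤ 1 / 8 ∧ 8 * p * δ ≤ q - p := by
    refine ⟨min (1 / 8) ((q - p) / (8 * p)), by positivity, min_le_left _ _, ?_⟩
    · rw [← le_div_iff₀' (by positivity)]
      exact min_le_right _ _
  refine ⟨max 1 (n * q / δ), le_max_left _ _, δ * ((q - p) / 4) ^ (n - 1), by positivity,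
    fun B i₀ r hr => ?_⟩
  have hr0 : 0 < r := one_pos.trans_le ((le_max_left _ _).trans hr)
  have hδr : n * q ≤ δ * r := (div_le_iff₀' hδ0).1 ((le_max_right _ _).trans hr)
  have hfinrank : (1 : ENNReal) ≤ Module.finrank ℝ E := by
    rw [Module.finrank_eq_card_basis B.toBasis]
    exact_mod_cast Fintype.card_pos_iff.2 ⟨i₀⟩
  have hside : (q - p) / 4 / r ≤ q / 2 / r - (1 / 2 + 2 * δ) * p / r := by
    rw [← sub_div]
    gcongr
    linarith
  calc ENNReal.ofReal (δ * ((q - p) / 4) ^ (n - 1) / r ^ (n - 1))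
      = ENNReal.ofReal (1 / 2 + δ - 1 / 2) * ENNReal.ofReal ((q - p) / 4 / r) ^ (n - 1) := by
        rw [← ENNReal.ofReal_pow (by positivity), ← ENNReal.ofReal_mul (by linarith),
          div_pow _ r, mul_div_assoc, add_sub_cancel_left]
    _ ≤ ENNReal.ofReal (1 / 2 + δ - 1 / 2)
          * ENNReal.ofReal (q / 2 / r - (1 / 2 + 2 * δ) * p / r) ^ (n - 1) := by gcongr
    _ ≤ (volume : Measure E).toSphere (sphericalPatch B i₀ p q r) := by
        rw [← volume_orthonormalBasis_box_pole B i₀,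
          Measure.toSphere_apply' _ (measurableSet_sphericalPatch B i₀ p q r)]
        exact (measure_mono (box_subset_smul_sphericalPatch B i₀ hp hq hr0 hδ0 hδ hδr)).trans
          (le_mul_of_one_le_left' hfinrank)

end SphericalPatch

section SingularKernel

lemma exists_rpow_neg_le_of_tendsto_mul_rpow {g : ℝ → ℝ} {κ K : ℝ} (hκ : 0 ≤ κ) (hK : 0 < K)
    (h : Tendsto (fun θ => g θ * θ ^ κ) (𝓝[>] 0) (𝓝 K)) :
    ∃ θ₀ > 0, ∀ θ M, 0 < θ → θ ≤ M → M < θ₀ → K / 2 * M ^ (-κ) ≤ g θ := by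
  have hev : ∀ᶠ θ in 𝓝[>] (0 : ℝ), K / 2 < g θ * θ ^ κ :=
    h.eventually (lt_mem_nhds (half_lt_self hK))
  obtain ⟨θ₀, hθ₀, hlow⟩ := mem_nhdsGT_iff_exists_Ioo_subset.1 hev
  refine ⟨θ₀, hθ₀, fun θ M hθ hM hMθ₀ => ?_⟩
  calc K / 2 * M ^ (-κ) ≤ K / 2 * θ ^ (-κ) := by
        gcongr ?_ * ?_
        exact Real.rpow_le_rpow_of_nonpos hθ hM (neg_nonpos.2 hκ)
    _ ≤ g θ := by
        rw [Real.rpow_neg hθ.le, ← div_eq_mul_inv, div_le_iff₀ (Real.rpow_pos_of_pos hθ _)]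
        exact (hlow ⟨hθ, hM.trans_lt hMθ₀⟩).le

variable {E : Type*} [NormedAddCommGroup E] [InnerProductSpace ℝ E] [FiniteDimensional ℝ E]

lemma exists_orthonormalBasis_apply_eq {ι : Type*} [Fintype ι]
    (hcard : Module.finrank ℝ E = Fintype.card ι) {i j : ι} (hij : i ≠ j) {ω f : E}
    (hω : ‖ω‖ = 1) (hf : ‖f‖ = 1) (hωf : ⟪ω, f⟫ = 0) :
    ∃ B : OrthonormalBasis ι ℝ E, B i = ω ∧ B j = f := by
  classical
  have hortho : Orthonormal ℝ (({i, j} : Set ι).domRestrict fun k => if k = i then ω else f) := by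
    rw [orthonormal_iff_ite]
    rintro ⟨k, rfl | rfl⟩ ⟨l, rfl | rfl⟩ <;>
      simp [Set.domRestrict, hω, hf, hωf, real_inner_comm ω f, Subtype.ext_iff,
        hij, hij.symm]
  obtain ⟨B, hB⟩ := hortho.exists_orthonormalBasis_extension_of_card_eq hcard
  exact ⟨B, by simpa using hB i (by simp), by simpa [hij.symm] using hB j (by simp)⟩

variable [MeasurableSpace E] [BorelSpace E]

lemma exists_setLIntegral_sphericalPatch_ge {ι : Type*} [Fintype ι] [Nontrivial ι] {b : ℝ → ℝ}
    {κ K : ℝ} (hκ : 0 ≤ κ) (hK : 0 < K)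
    (hb : Tendsto (fun θ => b (Real.cos θ) * θ ^ κ) (𝓝[>] 0) (𝓝 K))
    {p q : ℝ} (hp : 0 < p) (hpq : p < q) :
    ∃ R ≥ (1 : ℝ), ∃ c > (0 : ℝ), ∀ (B : OrthonormalBasis ι ℝ E) (i₀ : ι), ∀ r ≥ R,
      ENNReal.ofReal (c * r ^ (κ - (Fintype.card ι - 1 : ℕ))) ≤
        ∫⁻ σ in sphericalPatch B i₀ p q r, ENNReal.ofReal (b ⟪B i₀, (σ : E)⟫)
          ∂(volume : Measure E).toSphere := by
  obtain ⟨R, hR, c, hc, hpatch⟩ := exists_toSphere_sphericalPatch_ge (E := E) (ι := ι) hp hpq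
  obtain ⟨θ₀, hθ₀, hkernel⟩ := exists_rpow_neg_le_of_tendsto_mul_rpow hκ hK hb
  set M := 2 * (Fintype.card ι * q)
  have hM0 : 0 < M := by
    have := hp.trans hpq
    positivity
  refine ⟨max R (M / θ₀ + 1), hR.trans (le_max_left _ _), K / 2 * M ^ (-κ) * c, by positivity,
    fun B i₀ r hr => ?_⟩
  have hr0 : 0 < r := one_pos.trans_le (hR.trans ((le_max_left _ _).trans hr))
  have hMr : M / r < θ₀ := by
    rw [div_lt_comm₀ hr0 hθ₀]
    linarith [(le_max_right _ _).trans hr]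
  have hlow : ∀ σ ∈ sphericalPatch B i₀ p q r, K / 2 * (M / r) ^ (-κ) ≤ b ⟪B i₀, (σ : E)⟫ := by
    intro σ hσ
    obtain ⟨hpos, hle⟩ := arccos_inner_le_of_mem_sphericalPatch hp hr0 hσ
    have hcos : Real.cos (Real.arccos ⟪B i₀, (σ : E)⟫) = ⟪B i₀, (σ : E)⟫ :=
      Real.cos_arccos (by linarith [hσ.1]) (Real.arccos_pos.1 hpos).le
    simpa only [hcos] using hkernel _ _ hpos hle hMr
  calc ENNReal.ofReal (K / 2 * M ^ (-κ) * c * r ^ (κ - (Fintype.card ι - 1 : ℕ)))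
      = ENNReal.ofReal (K / 2 * (M / r) ^ (-κ))
          * ENNReal.ofReal (c / r ^ (Fintype.card ι - 1)) := by
        rw [← ENNReal.ofReal_mul (by positivity), Real.div_rpow hM0.le hr0.le,
          Real.rpow_sub hr0, Real.rpow_natCast, Real.rpow_neg hr0.le]
        congr 1
        field_simp
    _ ≤ ENNReal.ofReal (K / 2 * (M / r) ^ (-κ))
          * (volume : Measure E).toSphere (sphericalPatch B i₀ p q r) := by
        gcongr
        exact hpatch B i₀ r ((le_max_left _ _).trans hr)
    _ = ∫⁻ _ in sphericalPatch B i₀ p q r, ENNReal.ofReal (K / 2 * (M / r) ^ (-κ))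
          ∂(volume : Measure E).toSphere := (setLIntegral_const _ _).symm
    _ ≤ _ := setLIntegral_mono' (measurableSet_sphericalPatch B i₀ p q r) fun σ hσ =>
        ENNReal.ofReal_le_ofReal (hlow σ hσ)

end SingularKernel

section Dissipation

/-- The frequency multiplier `ξ ↦ ∫ b(cos θ) (1 - |φ(ξ⁻)|) dσ` of the coercivity functional. -/
def dissipationRate (b : ℝ → ℝ) (φ : E3 → ℂ) (ξ : E3) : ENNReal :=
  ∫⁻ σ, ENNReal.ofReal (b (⟪ξ, (σ : E3)⟫ / ‖ξ‖) * (1 - ‖φ (xiMinus ξ σ)‖)) ∂sphμ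

lemma xiMinus_smul {a : ℝ} (ha : 0 ≤ a) (ξ : E3) (σ : sphere (0 : E3) 1) :
    xiMinus (a • ξ) σ = a • xiMinus ξ σ := by
  simp only [xiMinus, norm_smul, Real.norm_of_nonneg ha]
  module

lemma continuous_xiMinus : Continuous fun p : E3 × sphere (0 : E3) 1 => xiMinus p.1 p.2 := by
  unfold xiMinus
  fun_prop

lemma measurable_kernel {b : ℝ → ℝ} (hb : Measurable b) (ξ : E3) :
    Measurable fun σ : sphere (0 : E3) 1 => b (⟪ξ, (σ : E3)⟫ / ‖ξ‖) :=
  hb.comp (Continuous.measurable (by fun_prop))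

lemma reflection_orthogonal_span_singleton_apply {E : Type*} [NormedAddCommGroup E]
    [InnerProductSpace ℝ E] {f : E} (hf : ‖f‖ = 1) (x : E) :
    (ℝ ∙ f)ᗮ.reflection x = x - (2 * ⟪f, x⟫) • f := by
  rw [Submodule.reflection_orthogonal_apply, Submodule.reflection_singleton_apply, hf]
  simp only [one_pow, RCLike.ofReal_real_eq_id, id_eq, div_one]
  module

lemma inner_reflection_of_inner_eq_zero {E : Type*} [NormedAddCommGroup E] [InnerProductSpace ℝ E]
    {f ξ : E} (hf : ‖f‖ = 1) (hξf : ⟪ξ, f⟫ = 0) (x : E) :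
    ⟪ξ, (ℝ ∙ f)ᗮ.reflection x⟫ = ⟪ξ, x⟫ := by
  rw [reflection_orthogonal_span_singleton_apply hf, inner_sub_right, inner_smul_right, hξf,
    mul_zero, sub_zero]

section Reflection

variable {b : ℝ → ℝ} {μ : Measure E3} [IsProbabilityMeasure μ] {f ξ : E3}

lemma measurable_dissipationIntegrand (hb : Measurable b) (ξ : E3) :
    Measurable fun σ : sphere (0 : E3) 1 =>
      ENNReal.ofReal (b (⟪ξ, (σ : E3)⟫ / ‖ξ‖) * (1 - ‖charFun μ (xiMinus ξ σ)‖)) := by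
  refine ((measurable_kernel hb ξ).mul (Continuous.measurable ?_)).ennreal_ofReal
  exact continuous_const.sub
    (continuous_charFun.comp (continuous_xiMinus.comp (.prodMk_right ξ))).norm

lemma xiMinus_reflection_sub (hf : ‖f‖ = 1) (ξ : E3) (σ : sphere (0 : E3) 1) :
    xiMinus ξ (sphereHomeomorph (ℝ ∙ f)ᗮ.reflection σ) - xiMinus ξ σ
      = (‖ξ‖ * ⟪f, (σ : E3)⟫) • f := by
  rw [xiMinus, xiMinus, coe_sphereHomeomorph, reflection_orthogonal_span_singleton_apply hf]
  module

lemma defect_le_one_sub_norm_add_reflection (hf : ‖f‖ = 1) (ξ : E3) (σ : sphere (0 : E3) 1) :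
    defect (charFun μ) ((‖ξ‖ * ⟪f, (σ : E3)⟫) • f) / 4 ≤ (1 - ‖charFun μ (xiMinus ξ σ)‖)
      + (1 - ‖charFun μ (xiMinus ξ (sphereHomeomorph (ℝ ∙ f)ᗮ.reflection σ))‖) := by
  rw [← xiMinus_reflection_sub hf]
  set x := xiMinus ξ σ
  set y := xiMinus ξ (sphereHomeomorph (ℝ ∙ f)ᗮ.reflection σ)
  linarith [defect_charFun_sub_le (μ := μ) y x, defect_le_two_mul (charFun μ) x,
    defect_le_two_mul (charFun μ) y]

-- The reflection in `fᗮ` preserves the kernel weight because `f` is orthogonal to `ξ`, and it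
-- moves `ξ⁻` by a multiple of `f` of size `‖ξ‖ ⟪f, σ⟫`.
lemma setLIntegral_kernel_le_dissipationRate (hb : Measurable b) (hb0 : ∀ x, 0 ≤ b x)
    (hf : ‖f‖ = 1) (hξf : ⟪ξ, f⟫ = 0) {m p q : ℝ} (hm : 0 ≤ m)
    (hdefect : ∀ u ∈ Icc p q, m ≤ defect (charFun μ) (u • f)) :
    ENNReal.ofReal (m / 8) * ∫⁻ σ in {σ | ‖ξ‖ * ⟪f, (σ : E3)⟫ ∈ Icc p q},
        ENNReal.ofReal (b (⟪ξ, (σ : E3)⟫ / ‖ξ‖)) ∂sphμ ≤ dissipationRate b (charFun μ) ξ := by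
  set L := (ℝ ∙ f)ᗮ.reflection with hL
  set S := {σ : sphere (0 : E3) 1 | ‖ξ‖ * ⟪f, (σ : E3)⟫ ∈ Icc p q}
  set G : sphere (0 : E3) 1 → ENNReal := fun σ =>
    ENNReal.ofReal (b (⟪ξ, (σ : E3)⟫ / ‖ξ‖) * (1 - ‖charFun μ (xiMinus ξ σ)‖)) with hG
  have hSmeas : MeasurableSet S :=
    (show Continuous fun σ : sphere (0 : E3) 1 => ‖ξ‖ * ⟪f, (σ : E3)⟫ by
      fun_prop).measurable measurableSet_Icc
  have hpointwise : ∀ σ ∈ S, ENNReal.ofReal (m / 4) * ENNReal.ofReal (b (⟪ξ, (σ : E3)⟫ / ‖ξ‖))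
      ≤ G σ + G (sphereHomeomorph L σ) := by
    intro σ hσ
    have h1 (x : E3) : 0 ≤ 1 - ‖charFun μ x‖ := sub_nonneg.2 (norm_charFun_le_one x)
    simp only [hG, coe_sphereHomeomorph, hL, inner_reflection_of_inner_eq_zero hf hξf]
    rw [← ENNReal.ofReal_add (mul_nonneg (hb0 _) (h1 _)) (mul_nonneg (hb0 _) (h1 _)),
      ← ENNReal.ofReal_mul (by positivity), ← mul_add, mul_comm (m / 4)]
    refine ENNReal.ofReal_le_ofReal (mul_le_mul_of_nonneg_left ?_ (hb0 _))
    linarith [hdefect _ hσ, defect_le_one_sub_norm_add_reflection (μ := μ) hf ξ σ]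
  have h4 : ENNReal.ofReal (m / 4) = 2 * ENNReal.ofReal (m / 8) := by
    rw [show (2 : ENNReal) = ENNReal.ofReal 2 by simp, ← ENNReal.ofReal_mul zero_le_two]
    congr 1
    ring
  have hrefl : ∫⁻ σ, G (sphereHomeomorph L σ) ∂sphμ = ∫⁻ σ, G σ ∂sphμ :=
    (measurePreserving_sphereHomeomorph L).lintegral_comp_emb
      (sphereHomeomorph L).measurableEmbedding G
  have hdouble : 2 * (ENNReal.ofReal (m / 8) * ∫⁻ σ in S,
      ENNReal.ofReal (b (⟪ξ, (σ : E3)⟫ / ‖ξ‖)) ∂sphμ) ≤ 2 * ∫⁻ σ, G σ ∂sphμ := by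
    calc 2 * (ENNReal.ofReal (m / 8) * ∫⁻ σ in S, ENNReal.ofReal (b (⟪ξ, (σ : E3)⟫ / ‖ξ‖)) ∂sphμ)
        = ∫⁻ σ in S, ENNReal.ofReal (m / 4) * ENNReal.ofReal (b (⟪ξ, (σ : E3)⟫ / ‖ξ‖)) ∂sphμ := by
          rw [lintegral_const_mul' _ _ ENNReal.ofReal_ne_top, h4, mul_assoc]
      _ ≤ ∫⁻ σ in S, (G σ + G (sphereHomeomorph L σ)) ∂sphμ := setLIntegral_mono' hSmeas hpointwise
      _ ≤ ∫⁻ σ, (G σ + G (sphereHomeomorph L σ)) ∂sphμ := setLIntegral_le_lintegral _ _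
      _ = 2 * ∫⁻ σ, G σ ∂sphμ := by
          rw [lintegral_add_left (measurable_dissipationIntegrand hb ξ), hrefl, two_mul]
  exact (ENNReal.mul_le_mul_iff_right two_ne_zero ENNReal.ofNat_ne_top).1 hdouble

end Reflection

variable {b : ℝ → ℝ} {s K : ℝ}

lemma KernelSingular.exists_setLIntegral_kernel_ge (hb : KernelSingular b s K) (hs : 0 < s)
    (hK : 0 < K) {p q : ℝ} (hp : 0 < p) (hpq : p < q) :
    ∃ R ≥ (1 : ℝ), ∃ c > (0 : ℝ), ∀ f ξ : E3, ‖f‖ = 1 → ⟪ξ, f⟫ = 0 → R ≤ ‖ξ‖ →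
      ENNReal.ofReal (c * ‖ξ‖ ^ (2 * s)) ≤ ∫⁻ σ in {σ | ‖ξ‖ * ⟪f, (σ : E3)⟫ ∈ Icc p q},
        ENNReal.ofReal (b (⟪ξ, (σ : E3)⟫ / ‖ξ‖)) ∂sphμ := by
  obtain ⟨R, hR, c, hc, hpatch⟩ :=
    exists_setLIntegral_sphericalPatch_ge (E := E3) (ι := Fin 3) (κ := 2 + 2 * s)
      (by positivity) hK hb hp hpq
  refine ⟨R, hR, c, hc, fun f ξ hf hξf hξ => ?_⟩
  have hξ0 : 0 < ‖ξ‖ := one_pos.trans_le (hR.trans hξ)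
  have hω : ‖‖ξ‖⁻¹ • ξ‖ = 1 := norm_smul_inv_norm (norm_pos_iff.1 hξ0)
  obtain ⟨B, hB0, hB1⟩ := exists_orthonormalBasis_apply_eq (ι := Fin 3) (by simp) zero_ne_one hω hf
    (by rw [real_inner_smul_left, hξf, mul_zero])
  have hinner (σ : sphere (0 : E3) 1) : ⟪B 0, (σ : E3)⟫ = ⟪ξ, (σ : E3)⟫ / ‖ξ‖ := by
    rw [hB0, real_inner_smul_left, inv_mul_eq_div]
  have h := hpatch B 0 ‖ξ‖ hξ
  simp only [hinner, Fintype.card_fin, Nat.add_one_sub_one, Nat.cast_ofNat,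
    add_sub_cancel_left] at h
  exact h.trans (lintegral_mono_set fun σ hσ => hB1 ▸ hσ.2 1 one_ne_zero)

lemma KernelSingular.exists_dissipationRate_ge (hsing : KernelSingular b s K) (hs : 0 < s)
    (hK : 0 < K) (hb : Measurable b) (hb0 : ∀ x, 0 ≤ b x) {p q : ℝ} (hp : 0 < p) (hpq : p < q) :
    ∃ R ≥ (1 : ℝ), ∃ c > (0 : ℝ), ∀ (μ : Measure E3) [IsProbabilityMeasure μ] (f ξ : E3) (m : ℝ),
      ‖f‖ = 1 → ⟪ξ, f⟫ = 0 → R ≤ ‖ξ‖ → 0 ≤ m →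
      (∀ u ∈ Icc p q, m ≤ defect (charFun μ) (u • f)) →
      ENNReal.ofReal (c * m * ‖ξ‖ ^ (2 * s)) ≤ dissipationRate b (charFun μ) ξ := by
  obtain ⟨R, hR, c, hc, hkernel⟩ := hsing.exists_setLIntegral_kernel_ge hs hK hp hpq
  refine ⟨R, hR, c / 8, by positivity, fun μ _ f ξ m hf hξf hξ hm hdefect => ?_⟩
  calc ENNReal.ofReal (c / 8 * m * ‖ξ‖ ^ (2 * s))
      = ENNReal.ofReal (m / 8) * ENNReal.ofReal (c * ‖ξ‖ ^ (2 * s)) := by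
        rw [← ENNReal.ofReal_mul (by positivity)]
        congr 1
        ring
    _ ≤ ENNReal.ofReal (m / 8) * ∫⁻ σ in {σ | ‖ξ‖ * ⟪f, (σ : E3)⟫ ∈ Icc p q},
          ENNReal.ofReal (b (⟪ξ, (σ : E3)⟫ / ‖ξ‖)) ∂sphμ := by
        gcongr
        exact hkernel f ξ hf hξf hξ
    _ ≤ dissipationRate b (charFun μ) ξ :=
        setLIntegral_kernel_le_dissipationRate hb hb0 hf hξf hm hdefect

end Dissipation

section Steinhaus

open scoped Pointwise

variable {G : Type*} [AddCommGroup G] [TopologicalSpace G] [IsTopologicalAddGroup G]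
  [MeasurableSpace G] [BorelSpace G] {μ : Measure G} [μ.IsAddHaarMeasure]

lemma mul_measure_inter_vadd_le_setLIntegral {f : G → ENNReal} (hf : Measurable f)
    (hsub : ∀ x y, f (x - y) ≤ 2 * f x + 2 * f y) {k : Set G} (hk : MeasurableSet k) (u : G) :
    f u * μ (k ∩ (u +ᵥ k)) ≤ 4 * ∫⁻ y in k, f y ∂μ := by
  have htranslate : ∫⁻ y in u +ᵥ k, f (y - u) ∂μ = ∫⁻ y in k, f y ∂μ := by
    rw [← lintegral_indicator hk, ← lintegral_indicator (hk.const_vadd u),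
      ← lintegral_sub_right_eq_self (k.indicator f) u]
    refine lintegral_congr fun y => ?_
    have hmem : y ∈ u +ᵥ k ↔ y - u ∈ k := by
      rw [mem_vadd_set_iff_neg_vadd_mem, vadd_eq_add, neg_add_eq_sub]
    by_cases hy : y - u ∈ k
    · rw [indicator_of_mem (hmem.2 hy), indicator_of_mem hy]
    · rw [indicator_of_notMem (hmem.not.2 hy), indicator_of_notMem hy]
  calc f u * μ (k ∩ (u +ᵥ k)) = ∫⁻ _ in k ∩ (u +ᵥ k), f u ∂μ := (setLIntegral_const _ _).symm
    _ ≤ ∫⁻ y in k ∩ (u +ᵥ k), (2 * f y + 2 * f (y - u)) ∂μ := by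
        refine lintegral_mono fun y => ?_
        simpa using hsub y (y - u)
    _ = 2 * ∫⁻ y in k ∩ (u +ᵥ k), f y ∂μ + 2 * ∫⁻ y in k ∩ (u +ᵥ k), f (y - u) ∂μ := by
        rw [lintegral_add_left (hf.const_mul 2), lintegral_const_mul _ hf,
          lintegral_const_mul' _ _ ENNReal.ofNat_ne_top]
    _ ≤ 2 * ∫⁻ y in k, f y ∂μ + 2 * ∫⁻ y in u +ᵥ k, f (y - u) ∂μ := by
        gcongr
        exacts [inter_subset_left, inter_subset_right]
    _ = 4 * ∫⁻ y in k, f y ∂μ := by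
        rw [htranslate, ← add_mul]
        norm_num

variable [LocallyCompactSpace G]

lemma eventually_half_measure_le_measure_inter_vadd [μ.InnerRegularCompactLTTop] {k : Set G}
    (hk : IsCompact k) (hk' : IsClosed k) (hμk : μ k ≠ 0) :
    ∀ᶠ u in 𝓝 (0 : G), μ k / (2 : ENNReal) ≤ μ (k ∩ (u +ᵥ k)) := by
  have hhalf : μ k / 2 ≠ 0 := (ENNReal.half_pos hμk).ne'
  filter_upwards [eventually_nhds_zero_measure_vadd_sdiff_lt (μ := μ) hk hk' hhalf] with u hu
  have hsplit : μ k ≤ μ (k ∩ (u +ᵥ k)) + μ k / 2 := by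
    calc μ k = μ ((u +ᵥ k) ∩ k) + μ ((u +ᵥ k) \ k) := by
          rw [measure_inter_add_sdiff _ hk'.measurableSet, measure_vadd]
      _ ≤ μ (k ∩ (u +ᵥ k)) + μ k / 2 := by
          rw [inter_comm]
          gcongr
  rw [← ENNReal.sub_half hk.measure_ne_top]
  exact tsub_le_iff_right.2 hsplit

-- Integrating `q u ≤ 2 q y + 2 q (y - u)` over `y` in a compact set on which the integral over `X`
-- is bounded produces a `ν`-integrable majorant of `q u` valid for all small `u`.
lemma tendsto_lintegral_nhds_zero_of_sub_le [FirstCountableTopology G]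
    (μ : Measure G) [μ.IsAddHaarMeasure] [μ.InnerRegular] [SFinite μ]
    {X : Type*} [MeasurableSpace X] {ν : Measure X} [SFinite ν]
    {q : G → X → ENNReal} (hq : Measurable (Function.uncurry q))
    (hsub : ∀ σ x y, q (x - y) σ ≤ 2 * q x σ + 2 * q y σ)
    (hzero : ∀ σ, Tendsto (fun u => q u σ) (𝓝 0) (𝓝 0)) (hfin : ∀ u, ∫⁻ σ, q u σ ∂ν ≠ ⊤) :
    Tendsto (fun u => ∫⁻ σ, q u σ ∂ν) (𝓝 0) (𝓝 0) := by
  have hswap : Measurable fun p : X × G => q p.2 p.1 := hq.comp measurable_swap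
  have hqσ (σ : X) : Measurable fun u => q u σ := hq.comp measurable_prodMk_right
  obtain ⟨n, hn⟩ : ∃ n : ℕ, 0 < μ {u | ∫⁻ σ, q u σ ∂ν ≤ n} := by
    refine exists_measure_pos_of_not_measure_iUnion_null ?_
    rw [show ⋃ n : ℕ, {u | ∫⁻ σ, q u σ ∂ν ≤ n} = univ from
      iUnion_eq_univ_iff.2 fun u => (ENNReal.exists_nat_gt (hfin u)).imp fun n => le_of_lt]
    exact NeZero.ne _
  have hmeas : MeasurableSet {u | ∫⁻ σ, q u σ ∂ν ≤ n} :=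
    measurableSet_le hq.lintegral_prod_right' measurable_const
  obtain ⟨k₀, hk₀n, hk₀, hμk₀⟩ := hmeas.exists_lt_isCompact hn
  set k := closure k₀
  have hk : IsCompact k := hk₀.closure
  have hkmeas : MeasurableSet k := isClosed_closure.measurableSet
  have hμk : μ k ≠ 0 := (hμk₀.trans_le (measure_mono subset_closure)).ne'
  have hmajorant : ∫⁻ σ, 4 * (∫⁻ y in k, q y σ ∂μ) / (μ k / 2) ∂ν ≠ ⊤ := by
    simp_rw [div_eq_mul_inv]
    rw [lintegral_mul_const' _ _ (by simpa using hμk), lintegral_const_mul' _ _ (by simp),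
      lintegral_lintegral_swap hswap.aemeasurable]
    refine ENNReal.mul_ne_top (ENNReal.mul_ne_top (by simp) ?_) (by simpa using hμk)
    refine ne_top_of_le_ne_top ?_
      (setLIntegral_mono measurable_const (hk₀.closure_subset_measurableSet hmeas hk₀n))
    rw [setLIntegral_const]
    exact ENNReal.mul_ne_top (ENNReal.natCast_ne_top n) hk.measure_ne_top
  rw [← lintegral_zero (μ := ν)]
  refine tendsto_lintegral_filter_of_dominated_convergence _
    (.of_forall fun u => hq.comp measurable_prodMk_left) ?_ hmajorant (ae_of_all _ hzero)
  filter_upwards [eventually_half_measure_le_measure_inter_vadd hk isClosed_closure hμk] with u hu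
  refine ae_of_all _ fun σ => ?_
  rw [ENNReal.le_div_iff_mul_le (by simp [hμk]) (by simp [ENNReal.div_eq_top, hk.measure_ne_top])]
  exact (mul_le_mul_right hu _).trans
    (mul_measure_inter_vadd_le_setLIntegral (hqσ σ) (hsub σ) hkmeas u)

lemma exists_sub_mem_nhds_zero_of_iUnion_eq_univ (μ : Measure G) [μ.IsAddHaarMeasure]
    [μ.InnerRegular] {ι : Type*} [Countable ι] {B : ι → Set G} (hB : ∀ i, MeasurableSet (B i))
    (hcover : ⋃ i, B i = univ) : ∃ i, B i - B i ∈ 𝓝 (0 : G) := by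
  obtain ⟨i, hi⟩ : ∃ i, 0 < μ (B i) :=
    exists_measure_pos_of_not_measure_iUnion_null (hcover ▸ NeZero.ne _)
  exact ⟨i, Measure.sub_mem_nhds_zero_of_addHaar_pos μ (B i) (hB i) hi⟩

end Steinhaus

lemma eventually_le_mul_of_hasDerivWithinAt_lt {g : ℝ → ℝ} {g' u : ℝ}
    (hg : HasDerivWithinAt g g' (Ici 0) 0) (h0 : g 0 = 0) (hu : g' < u) :
    ∀ᶠ t in 𝓝[≥] (0 : ℝ), g t ≤ u * t := by
  have hslope := hg.limsup_slope_le hu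
  rw [Ici_sdiff_left, eventually_nhdsWithin_iff] at hslope
  filter_upwards [self_mem_nhdsWithin, mem_nhdsWithin_of_mem_nhds hslope] with t ht hslope
  rcases (mem_Ici.1 ht).eq_or_lt with rfl | ht
  · simp [h0]
  · have := hslope ht
    rw [slope_def_field, h0, sub_zero, sub_zero, div_lt_iff₀ ht] at this
    exact this.le

section DefectRate

instance : IsFiniteMeasure sphμ := by
  unfold sphμ
  infer_instance

/-- The rate at which a Bobylev solution `ψ` creates defect: by the equation it is the time
derivative of `defect (ψ t) x` at each time `t` for which `φ = ψ t` has modulus one at `x`. -/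
def defectRate (b : ℝ → ℝ) (φ : E3 → ℂ) (x : E3) : ℝ :=
  2 * ∫ σ, b (⟪x, (σ : E3)⟫ / ‖x‖) * defect φ (xiMinus x σ) ∂sphμ

variable {b : ℝ → ℝ} {ψ : ℝ → E3 → ℂ} {ψ₀ : E3 → ℂ} {t : ℝ} {x : E3}

open scoped ComplexConjugate in
lemma conj_mul_bobylevIntegrand {μ : Measure E3} [IsProbabilityMeasure μ] (hψ : ψ t = charFun μ)
    (hx : defect (charFun μ) x = 0) (σ : sphere (0 : E3) 1) :
    conj (charFun μ x) * bobylevIntegrand b ψ t x σ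
      = -((b (⟪x, (σ : E3)⟫ / ‖x‖) * defect (charFun μ) (xiMinus x σ) : ℝ) : ℂ) := by
  have hplus : xiPlus x σ = x + -xiMinus x σ := by
    unfold xiPlus xiMinus
    module
  have hunit : conj (charFun μ x) * charFun μ x = 1 := by
    rw [Complex.conj_mul', norm_eq_one_of_defect_eq_zero hx]
    simp
  rw [bobylevIntegrand, hψ, hplus, charFun_add_of_defect_eq_zero hx, charFun_neg, defect]
  push_cast
  rw [← Complex.conj_mul']
  linear_combination (b (⟪x, (σ : E3)⟫ / ‖x‖) : ℂ)
    * (conj (charFun μ (xiMinus x σ)) * charFun μ (xiMinus x σ) - 1) * hunit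

lemma IsBobylevSolution.integrable_kernel_mul_defect (hψ : IsBobylevSolution b ψ ψ₀) (ht : 0 ≤ t)
    (hx : defect (ψ t) x = 0) : Integrable (fun σ : sphere (0 : E3) 1 =>
      b (⟪x, (σ : E3)⟫ / ‖x‖) * defect (ψ t) (xiMinus x σ)) sphμ := by
  obtain ⟨μ, _, hμ⟩ := (hψ.isCharFn t ht).exists_charFun
  have hint := (hψ.integrable t ht x).const_mul (starRingEnd ℂ (charFun μ x))
  rw [hμ] at hx ⊢
  simp_rw [conj_mul_bobylevIntegrand hμ hx] at hint
  simpa using hint.neg.re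

lemma IsBobylevSolution.hasDerivWithinAt_defect (hψ : IsBobylevSolution b ψ ψ₀) (ht : 0 ≤ t)
    (hx : defect (ψ t) x = 0) :
    HasDerivWithinAt (fun τ => defect (ψ τ) x) (defectRate b (ψ t) x) (Ici 0) t := by
  obtain ⟨μ, _, hμ⟩ := (hψ.isCharFn t ht).exists_charFun
  refine ((hψ.eq t ht x).norm_sq.const_sub 1).congr_deriv ?_
  rw [hμ] at hx ⊢
  have hconj : (∫ σ, bobylevIntegrand b ψ t x σ ∂sphμ) * starRingEnd ℂ (charFun μ x)
      = -((∫ σ, b (⟪x, (σ : E3)⟫ / ‖x‖) * defect (charFun μ) (xiMinus x σ) ∂sphμ : ℝ) : ℂ) := by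
    rw [mul_comm, ← integral_const_mul]
    simp_rw [conj_mul_bobylevIntegrand hμ hx]
    rw [integral_neg, integral_complex_ofReal]
  rw [Complex.inner, hconj, defectRate]
  simp

lemma IsBobylevSolution.continuous (hψ : IsBobylevSolution b ψ ψ₀) (ht : 0 ≤ t) :
    Continuous (ψ t) := by
  obtain ⟨μ, _, hμ⟩ := (hψ.isCharFn t ht).exists_charFun
  exact hμ ▸ continuous_charFun

variable {μ : Measure E3} [IsProbabilityMeasure μ]

lemma lintegral_kernel_mul_defect (hb0 : ∀ x, 0 ≤ b x)
    (hint : Integrable (fun σ : sphere (0 : E3) 1 =>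
      b (⟪x, (σ : E3)⟫ / ‖x‖) * defect (charFun μ) (xiMinus x σ)) sphμ) :
    ∫⁻ σ : sphere (0 : E3) 1, ENNReal.ofReal
        (b (⟪x, (σ : E3)⟫ / ‖x‖) * defect (charFun μ) (xiMinus x σ)) ∂sphμ
      = ENNReal.ofReal (defectRate b (charFun μ) x / 2) := by
  rw [defectRate, mul_div_cancel_left₀ _ two_ne_zero, ofReal_integral_eq_lintegral_ofReal hint
    (ae_of_all _ fun _ => mul_nonneg (hb0 _) defect_charFun_nonneg)]

lemma dissipationRate_le_ofReal_defectRate (hb0 : ∀ x, 0 ≤ b x)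
    (hint : Integrable (fun σ : sphere (0 : E3) 1 =>
      b (⟪x, (σ : E3)⟫ / ‖x‖) * defect (charFun μ) (xiMinus x σ)) sphμ) :
    dissipationRate b (charFun μ) x ≤ ENNReal.ofReal (defectRate b (charFun μ) x / 2) := by
  rw [← lintegral_kernel_mul_defect hb0 hint]
  refine lintegral_mono fun σ => ENNReal.ofReal_le_ofReal ?_
  exact mul_le_mul_of_nonneg_left (one_sub_norm_le_defect (norm_charFun_le_one _)) (hb0 _)

lemma defectRate_nonneg (hb0 : ∀ x, 0 ≤ b x) : 0 ≤ defectRate b (charFun μ) x :=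
  mul_nonneg two_pos.le (integral_nonneg fun _ => mul_nonneg (hb0 _) defect_charFun_nonneg)

lemma continuous_defect_smul_xiMinus (x : E3) :
    Continuous fun p : ℝ × sphere (0 : E3) 1 => defect (charFun μ) (p.1 • xiMinus x p.2) :=
  (continuous_defect continuous_charFun).comp
    (continuous_fst.smul (continuous_xiMinus.comp (continuous_const.prodMk continuous_snd)))

lemma lintegral_defect_smul_xiMinus (hb : Measurable b) (hb0 : ∀ x, 0 ≤ b x) {u : ℝ} (hu : 0 < u)
    (hint : Integrable (fun σ : sphere (0 : E3) 1 =>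
      b (⟪u • x, (σ : E3)⟫ / ‖u • x‖) * defect (charFun μ) (xiMinus (u • x) σ)) sphμ) :
    ∫⁻ σ : sphere (0 : E3) 1, ENNReal.ofReal (defect (charFun μ) (u • xiMinus x σ))
        ∂sphμ.withDensity (fun σ => ENNReal.ofReal (b (⟪x, (σ : E3)⟫ / ‖x‖)))
      = ENNReal.ofReal (defectRate b (charFun μ) (u • x) / 2) := by
  have hmeas : Measurable fun σ : sphere (0 : E3) 1 => defect (charFun μ) (u • xiMinus x σ) :=
    ((continuous_defect continuous_charFun).comp
      ((continuous_xiMinus.comp (.prodMk_right x)).const_smul u)).measurable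
  have hkernel (σ : sphere (0 : E3) 1) :
      ⟪u • x, (σ : E3)⟫ / ‖u • x‖ = ⟪x, (σ : E3)⟫ / ‖x‖ := by
    rw [real_inner_smul_left, norm_smul, Real.norm_of_nonneg hu.le, mul_div_mul_left _ _ hu.ne']
  rw [← lintegral_kernel_mul_defect hb0 hint,
    lintegral_withDensity_eq_lintegral_mul _ (measurable_kernel hb x).ennreal_ofReal
      hmeas.ennreal_ofReal]
  simp only [Pi.mul_apply, hkernel, xiMinus_smul hu.le, ENNReal.ofReal_mul (hb0 _)]

lemma IsBobylevSolution.integrable_kernel_mul_defect_of_mem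
    (hψ : IsBobylevSolution b ψ (charFun μ)) (hx : x ∈ unimodularSubspace μ) :
    Integrable (fun σ : sphere (0 : E3) 1 =>
      b (⟪x, (σ : E3)⟫ / ‖x‖) * defect (charFun μ) (xiMinus x σ)) sphμ := by
  have h := hψ.integrable_kernel_mul_defect (x := x) le_rfl
  rw [hψ.init] at h
  exact h (defect_eq_zero_of_mem_unimodularSubspace hx)

lemma IsBobylevSolution.hasDerivWithinAt_defect_of_mem
    (hψ : IsBobylevSolution b ψ (charFun μ)) (hx : x ∈ unimodularSubspace μ) :
    HasDerivWithinAt (fun t => defect (ψ t) x) (defectRate b (charFun μ) x) (Ici 0) 0 := by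
  have h := hψ.hasDerivWithinAt_defect (x := x) le_rfl
  rw [hψ.init] at h
  exact h (defect_eq_zero_of_mem_unimodularSubspace hx)

-- The defect is a squared length, so its integral in `σ` satisfies the quasi-triangle inequality
-- in `u`; being measurable and finite for every `u`, it is then continuous at `u = 0`.
lemma IsBobylevSolution.tendsto_defectRate_smul (hb : Measurable b) (hb0 : ∀ x, 0 ≤ b x)
    (hψ : IsBobylevSolution b ψ (charFun μ)) (hx : x ∈ unimodularSubspace μ) :
    Tendsto (fun u : ℝ => defectRate b (charFun μ) (u • x)) (𝓝[>] 0) (𝓝 0) := by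
  set ν := sphμ.withDensity fun σ => ENNReal.ofReal (b (⟪x, (σ : E3)⟫ / ‖x‖))
  set q : ℝ → sphere (0 : E3) 1 → ENNReal :=
    fun u σ => ENNReal.ofReal (defect (charFun μ) (u • xiMinus x σ)) with hq
  have hqcont : Continuous (Function.uncurry q) :=
    ENNReal.continuous_ofReal.comp (continuous_defect_smul_xiMinus x)
  have hsub (σ : sphere (0 : E3) 1) (u v : ℝ) : q (u - v) σ ≤ 2 * q u σ + 2 * q v σ := by
    simpa only [hq, sub_smul] using ofReal_defect_charFun_sub_le _ _
  have hzero (σ : sphere (0 : E3) 1) : Tendsto (fun u => q u σ) (𝓝 0) (𝓝 0) := by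
    have hcont : Continuous fun u => q u σ := hqcont.uncurry_right σ
    simpa [hq, defect_charFun_zero] using hcont.tendsto 0
  have hrate {u : ℝ} (hu : 0 < u) :
      ∫⁻ σ, q u σ ∂ν = ENNReal.ofReal (defectRate b (charFun μ) (u • x) / 2) :=
    lintegral_defect_smul_xiMinus hb hb0 hu
      (hψ.integrable_kernel_mul_defect_of_mem (Submodule.smul_mem _ u hx))
  have hfin (u : ℝ) : ∫⁻ σ, q u σ ∂ν ≠ ⊤ := by
    rcases lt_trichotomy u 0 with hu | rfl | hu
    · have hneg := hrate (neg_pos.2 hu)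
      simp only [hq, neg_smul, defect_charFun_neg] at hneg
      exact hneg ▸ ENNReal.ofReal_ne_top
    · simp [hq, defect_charFun_zero]
    · exact hrate hu ▸ ENNReal.ofReal_ne_top
  have hlim := ENNReal.tendsto_toReal_zero_iff hfin |>.2
    (tendsto_lintegral_nhds_zero_of_sub_le volume hqcont.measurable hsub hzero hfin)
  refine ((tendsto_nhdsWithin_of_tendsto_nhds (hlim.const_mul 2)).congr' ?_).trans ?_
  · filter_upwards [self_mem_nhdsWithin] with u hu
    rw [hrate hu, ENNReal.toReal_ofReal (by linarith [defectRate_nonneg hb0 (μ := μ) (x := u • x)])]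
    ring
  · simp

end DefectRate

section Equicontinuity

open scoped Pointwise in
lemma eventually_le_four_mul_of_eventually_smul_le {G : Type*} [NormedAddCommGroup G]
    [NormedSpace ℝ G] [FiniteDimensional ℝ G] [MeasurableSpace G] [BorelSpace G] {g : ℝ → G → ℝ}
    {w : ℝ → ℝ} (hcont : ∀ t ≥ 0, Continuous (g t))
    (hsub : ∀ t ≥ 0, ∀ x y, g t (x - y) ≤ 2 * g t x + 2 * g t y)
    (hsmul : ∀ x, ∀ᶠ u : ℝ in 𝓝[>] 0, ∀ᶠ t in 𝓝[≥] 0, g t (u • x) ≤ w t) :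
    ∀ᶠ p : ℝ × G in 𝓝[≥] 0 ×ˢ 𝓝 0, g p.1 p.2 ≤ 4 * w p.1 := by
  let B : ℕ × ℕ → Set G := fun i =>
    ⋂ t ∈ Icc (0 : ℝ) (1 / (i.2 + 1)), {x | g t ((1 / ((i.1 : ℝ) + 1)) • x) ≤ w t}
  have hB (i : ℕ × ℕ) : MeasurableSet (B i) :=
    (isClosed_biInter fun t ht => isClosed_le ((hcont t ht.1).comp (continuous_const_smul _))
      continuous_const).measurableSet
  have hinv : Tendsto (fun n : ℕ => 1 / ((n : ℝ) + 1)) atTop (𝓝[>] 0) :=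
    tendsto_nhdsWithin_iff.2
      ⟨tendsto_one_div_add_atTop_nhds_zero_nat, .of_forall fun n => mem_Ioi.2 (by positivity)⟩
  have hcover : ⋃ i, B i = univ := by
    refine eq_univ_of_forall fun x => mem_iUnion.2 ?_
    obtain ⟨k, hk⟩ := (hinv.eventually (hsmul x)).exists
    obtain ⟨u, hu, hsub⟩ := mem_nhdsGE_iff_exists_Icc_subset.1 hk
    obtain ⟨n, hn⟩ := (hinv.eventually (Ioo_mem_nhdsGT hu)).exists
    exact ⟨(k, n), mem_iInter₂.2 fun t ht => hsub ⟨ht.1, ht.2.trans hn.2.le⟩⟩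
  obtain ⟨⟨k, n⟩, hkn⟩ := exists_sub_mem_nhds_zero_of_iUnion_eq_univ Measure.addHaar hB hcover
  have hscale : Tendsto (fun x : G => ((k : ℝ) + 1) • x) (𝓝 0) (𝓝 0) := by
    simpa using (continuous_const_smul ((k : ℝ) + 1)).tendsto (0 : G)
  have htime : Icc (0 : ℝ) (1 / ((n : ℝ) + 1)) ∈ 𝓝[≥] 0 := Icc_mem_nhdsGE (by positivity)
  filter_upwards [prod_mem_prod htime (hscale hkn)] with ⟨t, x⟩ ⟨ht, hx⟩
  obtain ⟨y, hy, z, hz, hyz⟩ := Set.mem_sub.1 hx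
  have hy : g t ((1 / ((k : ℝ) + 1)) • y) ≤ w t := mem_iInter₂.1 hy t ht
  have hz : g t ((1 / ((k : ℝ) + 1)) • z) ≤ w t := mem_iInter₂.1 hz t ht
  have hx : x = (1 / ((k : ℝ) + 1)) • y - (1 / ((k : ℝ) + 1)) • z := by
    rw [← smul_sub, hyz, smul_smul, one_div_mul_cancel (by positivity), one_smul]
  change g t x ≤ 4 * w t
  rw [hx]
  linarith [hsub t ht.1 ((1 / ((k : ℝ) + 1)) • y) ((1 / ((k : ℝ) + 1)) • z)]

variable {b : ℝ → ℝ} {ψ : ℝ → E3 → ℂ} {μ : Measure E3} [IsProbabilityMeasure μ]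
  {x : E3} {ε : ℝ}

lemma IsBobylevSolution.eventually_defect_smul_le (hψ : IsBobylevSolution b ψ (charFun μ))
    (hb : Measurable b) (hb0 : ∀ x, 0 ≤ b x) (hx : x ∈ unimodularSubspace μ) (hε : 0 < ε) :
    ∀ᶠ u : ℝ in 𝓝[>] 0, ∀ᶠ t in 𝓝[≥] (0 : ℝ), defect (ψ t) (u • x) ≤ ε * t := by
  filter_upwards [(hψ.tendsto_defectRate_smul hb hb0 hx).eventually_lt_const hε] with u hu
  have hux := Submodule.smul_mem _ u hx
  refine eventually_le_mul_of_hasDerivWithinAt_lt (hψ.hasDerivWithinAt_defect_of_mem hux) ?_ hu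
  rw [hψ.init, defect_eq_zero_of_mem_unimodularSubspace hux]

lemma IsBobylevSolution.defect_sub_le {ψ₀ : E3 → ℂ} (hψ : IsBobylevSolution b ψ ψ₀) {t : ℝ}
    (ht : 0 ≤ t) (x y : E3) :
    defect (ψ t) (x - y) ≤ 2 * defect (ψ t) x + 2 * defect (ψ t) y := by
  obtain ⟨ν, _, hν⟩ := (hψ.isCharFn t ht).exists_charFun
  exact hν ▸ defect_charFun_sub_le x y

lemma IsBobylevSolution.eventually_defect_le_of_mem_unimodularSubspace
    (hψ : IsBobylevSolution b ψ (charFun μ)) (hb : Measurable b) (hb0 : ∀ x, 0 ≤ b x)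
    (hε : 0 < ε) :
    ∀ᶠ p : ℝ × E3 in 𝓝[≥] 0 ×ˢ 𝓝[unimodularSubspace μ] 0, defect (ψ p.1) p.2 ≤ ε * p.1 := by
  have hsmall := eventually_le_four_mul_of_eventually_smul_le
    (G := unimodularSubspace μ) (g := fun t h => defect (ψ t) h) (w := fun t => ε / 4 * t)
    (fun t ht => (continuous_defect (hψ.continuous ht)).comp continuous_subtype_val)
    (fun t ht x y => hψ.defect_sub_le ht x y)
    (fun h => hψ.eventually_defect_smul_le hb hb0 h.2 (by positivity))
  rw [nhdsWithin_eq_map_subtype_coe (unimodularSubspace μ).zero_mem, ← map_id (f := 𝓝[≥] (0 : ℝ)),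
    prod_map_map_eq, eventually_map]
  filter_upwards [hsmall] with p hp
  exact hp.trans_eq (by simp; ring)

end Equicontinuity

section DefectGrowth

lemma exists_norm_eq_one_of_ne_bot {E : Type*} [NormedAddCommGroup E] [NormedSpace ℝ E]
    {P : Submodule ℝ E} (hP : P ≠ ⊥) : ∃ x ∈ P, ‖x‖ = 1 := by
  have := Submodule.nontrivial_iff_ne_bot.2 hP
  obtain ⟨x, hx⟩ := exists_norm_eq P zero_le_one
  exact ⟨x, x.2, hx⟩

/-- Near some point of the open ray spanned by `f`, and within the subspace `P`, the defect of
`ψ t` grows at least linearly in time. -/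
def HasLinearDefectGrowth (ψ : ℝ → E3 → ℂ) (P : Submodule ℝ E3) (f : E3) : Prop :=
  ∃ a > (0 : ℝ), ∃ c > (0 : ℝ),
    ∀ᶠ p : ℝ × E3 in 𝓝[≥] 0 ×ˢ 𝓝[P] (a • f), c * p.1 ≤ defect (ψ p.1) p.2

variable {b : ℝ → ℝ} {s K : ℝ} {ψ : ℝ → E3 → ℂ} {μ : Measure E3} [IsProbabilityMeasure μ]
  {f x : E3}

lemma IsBobylevSolution.hasLinearDefectGrowth_of_notMem (hψ : IsBobylevSolution b ψ (charFun μ))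
    (hf : f ∉ unimodularSubspace μ) (P : Submodule ℝ E3) : HasLinearDefectGrowth ψ P f := by
  obtain ⟨a, ha, hpos⟩ := exists_defect_smul_pos hf
  have hcont : ContinuousWithinAt (fun p : ℝ × E3 => defect (ψ p.1) p.2) (Ici 0 ×ˢ univ)
      (0, a • f) :=
    continuousWithinAt_const.sub ((hψ.cont _ ⟨self_mem_Ici, mem_univ _⟩).norm.pow 2)
  have hlim : Tendsto (fun p : ℝ × E3 => defect (ψ p.1) p.2) (𝓝[≥] 0 ×ˢ 𝓝[P] (a • f))
      (𝓝 (defect (charFun μ) (a • f))) := by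
    rw [← hψ.init]
    refine hcont.tendsto.mono_left ?_
    rw [nhdsWithin_prod_eq]
    exact Filter.prod_mono le_rfl (nhdsWithin_mono _ (subset_univ _))
  refine ⟨a, ha, defect (charFun μ) (a • f) / 2, by positivity, ?_⟩
  have htime : ∀ᶠ t in 𝓝[≥] (0 : ℝ), t ≤ 1 :=
    mem_nhdsWithin_of_mem_nhds (Iic_mem_nhds zero_lt_one)
  filter_upwards [hlim.eventually_const_lt (half_lt_self hpos), htime.prod_inl _] with p hp ht
  exact (mul_le_of_le_one_right (by positivity) ht).trans hp.le

lemma IsBobylevSolution.exists_defectRate_smul_pos (hψ : IsBobylevSolution b ψ (charFun μ))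
    (hsing : KernelSingular b s K) (hs : 0 < s) (hK : 0 < K) (hb : Measurable b)
    (hb0 : ∀ x, 0 ≤ b x) (hV : unimodularSubspace μ ≠ ⊤) (hf : f ∈ unimodularSubspace μ)
    (hf1 : ‖f‖ = 1) : ∃ r > (0 : ℝ), 0 < defectRate b (charFun μ) (r • f) := by
  obtain ⟨e, he, he1⟩ :=
    exists_norm_eq_one_of_ne_bot (mt (Submodule.orthogonal_eq_bot_iff).1 hV)
  have hef : ⟪f, e⟫ = 0 := Submodule.inner_right_of_mem_orthogonal hf he
  have heV : e ∉ unimodularSubspace μ := fun h => by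
    have : e = 0 := Submodule.disjoint_def.1 (Submodule.orthogonal_disjoint _) e h he
    simp [this] at he1
  obtain ⟨a, ha, hpos⟩ := exists_defect_smul_pos heV
  set m := defect (charFun μ) (a • e) / 2
  have hcont : Continuous fun u : ℝ => defect (charFun μ) (u • e) :=
    (continuous_defect continuous_charFun).comp (by fun_prop)
  obtain ⟨q, hq, hdefect⟩ := mem_nhdsGE_iff_exists_Icc_subset.1
    (hcont.continuousWithinAt.eventually_const_lt (half_lt_self hpos) :
      ∀ᶠ u in 𝓝[≥] a, m < defect (charFun μ) (u • e))
  obtain ⟨R, hR, c, hc, hrate⟩ := hsing.exists_dissipationRate_ge hs hK hb hb0 ha hq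
  have hR0 : 0 < R := one_pos.trans_le hR
  have hle := (hrate μ e (R • f) m he1 (by rw [real_inner_smul_left, hef, mul_zero])
    (by rw [norm_smul, hf1, mul_one, Real.norm_of_nonneg hR0.le]) (by positivity)
    fun u hu => (hdefect hu).le).trans (dissipationRate_le_ofReal_defectRate hb0
      (hψ.integrable_kernel_mul_defect_of_mem (Submodule.smul_mem _ R hf)))
  have hRf : R • f ≠ 0 := smul_ne_zero hR0.ne' (norm_ne_zero_iff.1 (by simp [hf1]))
  refine ⟨R, hR0, (div_pos_iff_of_pos_right two_pos).1 (ENNReal.ofReal_pos.1 ?_)⟩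
  exact (ENNReal.ofReal_pos.2 (by positivity)).trans_le hle

lemma IsBobylevSolution.hasLinearDefectGrowth_of_mem (hψ : IsBobylevSolution b ψ (charFun μ))
    (hsing : KernelSingular b s K) (hs : 0 < s) (hK : 0 < K) (hb : Measurable b)
    (hb0 : ∀ x, 0 ≤ b x) (hV : unimodularSubspace μ ≠ ⊤) (hf : f ∈ unimodularSubspace μ)
    (hf1 : ‖f‖ = 1) : HasLinearDefectGrowth ψ (unimodularSubspace μ) f := by
  obtain ⟨r, hr, hD⟩ := hψ.exists_defectRate_smul_pos hsing hs hK hb hb0 hV hf hf1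
  set x := r • f
  set D := defectRate b (charFun μ) x
  have hxV : x ∈ unimodularSubspace μ := Submodule.smul_mem _ r hf
  have hlower : ∀ᶠ t in 𝓝[≥] (0 : ℝ), -defect (ψ t) x ≤ -(D / 2) * t := by
    refine eventually_le_mul_of_hasDerivWithinAt_lt
      (hψ.hasDerivWithinAt_defect_of_mem hxV).neg ?_ (neg_lt_neg (half_lt_self hD))
    rw [hψ.init, defect_eq_zero_of_mem_unimodularSubspace hxV, neg_zero]
  have htranslate : Tendsto (fun y => y - x) (𝓝[unimodularSubspace μ] x)
      (𝓝[unimodularSubspace μ] 0) := by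
    refine tendsto_nhdsWithin_iff.2 ⟨?_, ?_⟩
    · exact tendsto_nhdsWithin_of_tendsto_nhds (by simpa using (continuous_sub_right x).tendsto x)
    · filter_upwards [self_mem_nhdsWithin] with y hy using Submodule.sub_mem _ hy hxV
  have hupper := (tendsto_id.prodMap htranslate).eventually
    (hψ.eventually_defect_le_of_mem_unimodularSubspace hb hb0 (by positivity : 0 < D / 8))
  refine ⟨r, hr, D / 8, by positivity, ?_⟩
  filter_upwards [(hlower.and self_mem_nhdsWithin).prod_inl _, hupper]
    with ⟨t, y⟩ ⟨hlower, ht⟩ hupper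
  have hsub := hψ.defect_sub_le (mem_Ici.1 ht) y (y - x)
  rw [sub_sub_cancel] at hsub
  simp only [Prod.map_apply, id_eq] at hlower hupper ⊢
  linarith

end DefectGrowth

section Coercivity

/-- Uniformly for small `t`, the dissipation rate of `ψ t` is bounded below by `t ‖ξ‖ ^ (2 * s)` up
to a constant at all large frequencies `ξ` orthogonal to some member of the set `S` of
directions. -/
def IsCoerciveOrthogonalTo (b : ℝ → ℝ) (s : ℝ) (ψ : ℝ → E3 → ℂ) (S : Set E3) : Prop :=
  ∃ R ≥ (1 : ℝ), ∃ c > (0 : ℝ), ∀ᶠ t in 𝓝[≥] 0, ∀ f ∈ S, ∀ ξ : E3, ⟪ξ, f⟫ = 0 → R ≤ ‖ξ‖ →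
    ENNReal.ofReal (c * t * ‖ξ‖ ^ (2 * s)) ≤ dissipationRate b (ψ t) ξ

variable {b : ℝ → ℝ} {s K : ℝ} {ψ : ℝ → E3 → ℂ}

lemma IsCoerciveOrthogonalTo.mono {S S' : Set E3} (h : IsCoerciveOrthogonalTo b s ψ S)
    (hS : S' ⊆ S) : IsCoerciveOrthogonalTo b s ψ S' := by
  obtain ⟨R, hR, c, hc, h⟩ := h
  exact ⟨R, hR, c, hc, h.mono fun t ht f hf => ht f (hS hf)⟩

lemma IsCoerciveOrthogonalTo.union {S S' : Set E3} (h : IsCoerciveOrthogonalTo b s ψ S)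
    (h' : IsCoerciveOrthogonalTo b s ψ S') : IsCoerciveOrthogonalTo b s ψ (S ∪ S') := by
  obtain ⟨R, hR, c, hc, h⟩ := h
  obtain ⟨R', _, c', hc', h'⟩ := h'
  refine ⟨max R R', hR.trans (le_max_left _ _), min c c', lt_min hc hc', ?_⟩
  filter_upwards [h, h', self_mem_nhdsWithin] with t h h' ht
  have ht : 0 ≤ t := ht
  rintro f (hf | hf) ξ hξ hRξ
  · refine le_trans (ENNReal.ofReal_le_ofReal ?_) (h f hf ξ hξ ((le_max_left _ _).trans hRξ))
    gcongr
    exact min_le_left _ _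
  · refine le_trans (ENNReal.ofReal_le_ofReal ?_) (h' f hf ξ hξ ((le_max_right _ _).trans hRξ))
    gcongr
    exact min_le_right _ _

lemma HasLinearDefectGrowth.exists_isCoerciveOrthogonalTo {ψ₀ : E3 → ℂ}
    (hψ : IsBobylevSolution b ψ ψ₀) (hsing : KernelSingular b s K) (hs : 0 < s) (hK : 0 < K)
    (hb : Measurable b) (hb0 : ∀ x, 0 ≤ b x) {P : Submodule ℝ E3} {f₀ : E3}
    (h : HasLinearDefectGrowth ψ P f₀) :
    ∃ U ∈ 𝓝[P] f₀, IsCoerciveOrthogonalTo b s ψ (U ∩ sphere 0 1) := by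
  obtain ⟨a, ha, c, hc, hgrowth⟩ := h
  obtain ⟨I, hI, W, hW, hIW⟩ := eventually_prod_iff.1 hgrowth
  have hsmul : Tendsto (fun p : ℝ × E3 => p.1 • p.2) (𝓝[≥] a ×ˢ 𝓝[P] f₀) (𝓝[P] (a • f₀)) := by
    refine tendsto_nhdsWithin_iff.2 ⟨?_, ?_⟩
    · refine (continuous_smul.tendsto (a, f₀)).mono_left ?_
      rw [nhds_prod_eq]
      exact Filter.prod_mono nhdsWithin_le_nhds nhdsWithin_le_nhds
    · have hP : ∀ᶠ f in 𝓝[P] f₀, f ∈ P := self_mem_nhdsWithin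
      filter_upwards [hP.prod_inr _] with p hp using P.smul_mem _ hp
  obtain ⟨J, hJ, U, hU, hJU⟩ := eventually_prod_iff.1 (hsmul.eventually hW)
  obtain ⟨q, hq, hsub⟩ := mem_nhdsGE_iff_exists_Icc_subset.1 hJ
  obtain ⟨R, hR, c', hc', hrate⟩ := hsing.exists_dissipationRate_ge hs hK hb hb0 ha hq
  refine ⟨{f | U f}, hU, R, hR, c' * c, by positivity, ?_⟩
  filter_upwards [hI, self_mem_nhdsWithin] with t hIt ht f hf ξ hξ hRξ
  have ht : 0 ≤ t := ht
  obtain ⟨ν, _, hν⟩ := (hψ.isCharFn t ht).exists_charFun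
  have hdefect (u : ℝ) (hu : u ∈ Icc a q) : c * t ≤ defect (charFun ν) (u • f) :=
    hν ▸ hIW hIt (hJU (hsub hu) hf.1)
  rw [hν, mul_assoc c']
  exact hrate ν f ξ (c * t) (mem_sphere_zero_iff_norm.1 hf.2) hξ hRξ (by positivity) hdefect

lemma isCoerciveOrthogonalTo_inter_sphere {P : Submodule ℝ E3}
    (h : ∀ f ∈ P, ‖f‖ = 1 → ∃ U ∈ 𝓝[P] f, IsCoerciveOrthogonalTo b s ψ (U ∩ sphere 0 1)) :
    IsCoerciveOrthogonalTo b s ψ (P ∩ sphere 0 1) := by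
  have hcompact : IsCompact ((P : Set E3) ∩ sphere 0 1) :=
    (isCompact_sphere 0 1).inter_left P.closed_of_finiteDimensional
  refine hcompact.induction_on ⟨1, le_rfl, 1, one_pos, by simp⟩ (fun _ _ hS h => h.mono hS)
    (fun _ _ => .union) fun f hf => ?_
  obtain ⟨U, hU, hUcoercive⟩ := h f hf.1 (mem_sphere_zero_iff_norm.1 hf.2)
  exact ⟨U ∩ sphere 0 1, inter_mem (nhdsWithin_mono _ inter_subset_left hU)
    (mem_of_superset self_mem_nhdsWithin inter_subset_right), hUcoercive⟩

lemma exists_mem_inner_eq_zero_norm_eq_one {E : Type*} [NormedAddCommGroup E]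
    [InnerProductSpace ℝ E] {P : Submodule ℝ E} (hP : 1 < Module.finrank ℝ P) (ξ : E) :
    ∃ f ∈ P, ⟪ξ, f⟫ = 0 ∧ ‖f‖ = 1 := by
  have : FiniteDimensional ℝ P := Module.finite_of_finrank_pos (one_pos.trans hP)
  obtain ⟨f, hf, hf1⟩ := exists_norm_eq_one_of_ne_bot
    (LinearMap.ker_ne_bot_of_finrank_lt (f := (innerₛₗ ℝ ξ).domRestrict P)
      (by rwa [Module.finrank_self]))
  exact ⟨f, f.2, by simpa using hf, hf1⟩

variable {μ : Measure E3} [IsProbabilityMeasure μ]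

-- A subspace of dimension two meets every plane `ξᗮ`; one of `V = unimodularSubspace μ` and `Vᗮ`
-- has dimension at least two.
lemma IsBobylevSolution.exists_finrank_hasLinearDefectGrowth
    (hψ : IsBobylevSolution b ψ (charFun μ)) (hsing : KernelSingular b s K) (hs : 0 < s)
    (hK : 0 < K) (hb : Measurable b) (hb0 : ∀ x, 0 ≤ b x) (hV : unimodularSubspace μ ≠ ⊤) :
    ∃ P : Submodule ℝ E3, 1 < Module.finrank ℝ P ∧
      ∀ f ∈ P, ‖f‖ = 1 → HasLinearDefectGrowth ψ P f := by
  by_cases hdim : 1 < Module.finrank ℝ (unimodularSubspace μ)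
  · exact ⟨_, hdim, fun f hf hf1 =>
      hψ.hasLinearDefectGrowth_of_mem hsing hs hK hb hb0 hV hf hf1⟩
  · refine ⟨(unimodularSubspace μ)ᗮ, ?_, fun f hf hf1 =>
      hψ.hasLinearDefectGrowth_of_notMem (fun hfV => ?_) _⟩
    · have := Submodule.finrank_add_finrank_orthogonal (unimodularSubspace μ)
      rw [finrank_euclideanSpace_fin] at this
      omega
    · have : f = 0 := Submodule.disjoint_def.1 (Submodule.orthogonal_disjoint _) f hfV hf
      simp [this] at hf1

lemma IsBobylevSolution.exists_dissipationRate_ge (hψ : IsBobylevSolution b ψ (charFun μ))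
    (hsing : KernelSingular b s K) (hs : 0 < s) (hK : 0 < K) (hb : Measurable b)
    (hb0 : ∀ x, 0 ≤ b x) (hV : unimodularSubspace μ ≠ ⊤) :
    ∃ R ≥ (1 : ℝ), ∃ c > (0 : ℝ), ∀ᶠ t in 𝓝[≥] 0, ∀ ξ : E3, R ≤ ‖ξ‖ →
      ENNReal.ofReal (c * t * ‖ξ‖ ^ (2 * s)) ≤ dissipationRate b (ψ t) ξ := by
  obtain ⟨P, hP, hgrowth⟩ :=
    hψ.exists_finrank_hasLinearDefectGrowth hsing hs hK hb hb0 hV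
  obtain ⟨R, hR, c, hc, hcoercive⟩ := isCoerciveOrthogonalTo_inter_sphere fun f hf hf1 =>
    (hgrowth f hf hf1).exists_isCoerciveOrthogonalTo hψ hsing hs hK hb hb0
  refine ⟨R, hR, c, hc, hcoercive.mono fun t ht ξ hξ => ?_⟩
  obtain ⟨f, hf, hξf, hf1⟩ := exists_mem_inner_eq_zero_norm_eq_one hP ξ
  exact ht f ⟨hf, mem_sphere_zero_iff_norm.2 hf1⟩ ξ hξf hξ

lemma one_add_sq_rpow_le {r : ℝ} (hr : 1 ≤ r) (hs : 0 ≤ s) :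
    (1 + r ^ 2) ^ s ≤ 2 ^ s * r ^ (2 * s) := by
  have hr0 : 0 ≤ r := zero_le_one.trans hr
  calc (1 + r ^ 2) ^ s ≤ (2 * r ^ 2) ^ s := by
        gcongr
        linarith [one_le_pow₀ hr (n := 2)]
    _ = 2 ^ s * r ^ (2 * s) := by
        rw [mul_rpow two_pos.le (by positivity), rpow_mul hr0, rpow_two]

lemma IsBobylevSolution.exists_mul_one_add_sq_rpow_le (hψ : IsBobylevSolution b ψ (charFun μ))
    (hsing : KernelSingular b s K) (hs : 0 < s) (hK : 0 < K) (hb : Measurable b)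
    (hb0 : ∀ x, 0 ≤ b x) (hV : unimodularSubspace μ ≠ ⊤) :
    ∃ T > (0 : ℝ), ∃ C > (0 : ℝ), ∀ t ∈ Icc 0 T, ∀ ξ : E3,
      ENNReal.ofReal (t * (1 + ‖ξ‖ ^ 2) ^ s)
        ≤ ENNReal.ofReal C * (dissipationRate b (ψ t) ξ + 1) := by
  obtain ⟨R, hR, c, hc, hrate⟩ := hψ.exists_dissipationRate_ge hsing hs hK hb hb0 hV
  obtain ⟨T, hT, hsub⟩ := mem_nhdsGE_iff_exists_Icc_subset.1 hrate
  have hT : 0 < T := hT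
  refine ⟨T, hT, 2 ^ s / c + T * (1 + R ^ 2) ^ s, by positivity, fun t ht ξ => ?_⟩
  have ht0 := ht.1
  rcases le_total R ‖ξ‖ with hξ | hξ
  · calc ENNReal.ofReal (t * (1 + ‖ξ‖ ^ 2) ^ s)
        ≤ ENNReal.ofReal (2 ^ s / c * (c * t * ‖ξ‖ ^ (2 * s))) := by
          refine ENNReal.ofReal_le_ofReal ((mul_le_mul_of_nonneg_left
            (one_add_sq_rpow_le (hR.trans hξ) hs.le) ht0).trans_eq ?_)
          field_simp
      _ = ENNReal.ofReal (2 ^ s / c) * ENNReal.ofReal (c * t * ‖ξ‖ ^ (2 * s)) :=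
          ENNReal.ofReal_mul (by positivity)
      _ ≤ ENNReal.ofReal (2 ^ s / c + T * (1 + R ^ 2) ^ s) * (dissipationRate b (ψ t) ξ + 1) := by
          gcongr
          · exact le_add_of_nonneg_right (by positivity)
          · exact (hsub ht ξ hξ).trans le_self_add
  · calc ENNReal.ofReal (t * (1 + ‖ξ‖ ^ 2) ^ s)
        ≤ ENNReal.ofReal (2 ^ s / c + T * (1 + R ^ 2) ^ s) * 1 := by
          rw [mul_one]
          refine ENNReal.ofReal_le_ofReal (le_add_of_nonneg_of_le (by positivity) ?_)
          gcongr
          exact ht.2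
      _ ≤ ENNReal.ofReal (2 ^ s / c + T * (1 + R ^ 2) ^ s) * (dissipationRate b (ψ t) ξ + 1) := by
          gcongr
          exact le_add_self

lemma mul_lintegral_mul_le_of_forall_le {X : Type*} [MeasurableSpace X] {ν : Measure X}
    {a C : ENNReal} (ha : a ≠ ⊤) (hC : C ≠ ⊤) {w D g : X → ENNReal} (hg : Measurable g)
    (h : ∀ x, a * w x ≤ C * (D x + 1)) :
    a * ∫⁻ x, w x * g x ∂ν ≤ C * (∫⁻ x, D x * g x ∂ν + ∫⁻ x, g x ∂ν) := by
  rw [← lintegral_add_right _ hg, ← lintegral_const_mul' _ _ ha, ← lintegral_const_mul' _ _ hC]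
  refine lintegral_mono fun x => ?_
  calc a * (w x * g x) = a * w x * g x := (mul_assoc _ _ _).symm
    _ ≤ C * (D x + 1) * g x := mul_le_mul_left (h x) _
    _ = C * (D x * g x + g x) := by ring

end Coercivity

theorem time_degenerate_coercivity_general
    (s K : ℝ) (hs0 : 0 < s) (hK : 0 < K)
    (b : ℝ → ℝ) (hb_meas : Measurable b) (hb_nonneg : ∀ x, 0 ≤ b x)
    (hb_sing : KernelSingular b s K)
    (F₀ : Measure E3) [IsProbabilityMeasure F₀] (hnotdirac : ∀ v₀ : E3, F₀ {v₀} ≠ 1)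
    (ψ : ℝ → E3 → ℂ) (hψ : IsBobylevSolution b ψ (charFn F₀)) :
    ∃ T > (0 : ℝ), ∃ C > (0 : ℝ), ∀ t ∈ Icc (0 : ℝ) T, ∀ h : E3 → ℂ, Measurable h →
      ENNReal.ofReal t * (∫⁻ ξ : E3, ENNReal.ofReal ((1 + ‖ξ‖ ^ 2) ^ s * ‖h ξ‖ ^ 2)) ≤
        ENNReal.ofReal C *
          ((∫⁻ ξ : E3, dissipationRate b (ψ t) ξ * ENNReal.ofReal (‖h ξ‖ ^ 2))
            + ∫⁻ ξ : E3, ENNReal.ofReal (‖h ξ‖ ^ 2)) := by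
  have hneg : Measurable fun v : E3 => (-1 : ℝ) • v := measurable_const_smul _
  set μ := F₀.map fun v => (-1 : ℝ) • v with hμ
  have : IsProbabilityMeasure μ := Measure.isProbabilityMeasure_map hneg.aemeasurable
  have hV : unimodularSubspace μ ≠ ⊤ := unimodularSubspace_ne_top fun v hv => hnotdirac (-v) <| by
    rwa [hμ, Measure.map_apply hneg (measurableSet_singleton v),
      show (fun v : E3 => (-1 : ℝ) • v) ⁻¹' {v} = {-v} by ext; simp] at hv
  rw [charFn_eq_charFun_map] at hψ
  obtain ⟨T, hT, C, hC, hle⟩ :=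
    hψ.exists_mul_one_add_sq_rpow_le hb_sing hs0 hK hb_meas hb_nonneg hV
  refine ⟨T, hT, C, hC, fun t ht h hh => ?_⟩
  have hsplit (ξ : E3) := ENNReal.ofReal_mul (q := ‖h ξ‖ ^ 2)
    (show 0 ≤ (1 + ‖ξ‖ ^ 2) ^ s by positivity)
  simp only [hsplit]
  refine mul_lintegral_mul_le_of_forall_le ENNReal.ofReal_ne_top ENNReal.ofReal_ne_top
    (hh.norm.pow_const 2).ennreal_ofReal fun ξ => ?_
  exact (ENNReal.ofReal_mul ht.1).symm.trans_le (hle t ht ξ)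

/-- time-degenerate coercivity estimate. -/
theorem time_degenerate_coercivity
    (s K : ℝ) (hs0 : 0 < s) (hs1 : s < 1) (hK : 0 < K)
    (b : ℝ → ℝ) (hb_meas : Measurable b) (hb_nonneg : ∀ x, 0 ≤ b x)
    (hb_sing : KernelSingular b s K)
    (α : ℝ) (hα : 2 * s < α) (hα2 : α ≤ 2)
    (F₀ : Measure E3) [IsProbabilityMeasure F₀]
    (hnotdirac : ∀ v₀ : E3, F₀ {v₀} ≠ 1)
    (ψ₀ : E3 → ℂ) (hψ₀ : ψ₀ = charFn F₀) (hψ₀K : KBdd α ψ₀)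
    (ψ : ℝ → E3 → ℂ) (hψ : IsBobylevSolution b ψ ψ₀) :
    ∃ T > (0:ℝ), ∃ C > (0:ℝ), ∀ t ∈ Set.Icc (0:ℝ) T, ∀ h : E3 → ℂ, Measurable h →
      (∫⁻ ξ : E3, ENNReal.ofReal ((1 + ‖ξ‖ ^ 2) ^ s * ‖h ξ‖ ^ 2)) < ⊤ →
      ENNReal.ofReal t * (∫⁻ ξ : E3, ENNReal.ofReal ((1 + ‖ξ‖ ^ 2) ^ s * ‖h ξ‖ ^ 2)) ≤
        ENNReal.ofReal C *
          ((∫⁻ ξ : E3,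
              (∫⁻ σ, ENNReal.ofReal
                  (b (⟪ξ, (σ : E3)⟫ / ‖ξ‖) * (1 - ‖ψ t (xiMinus ξ σ)‖)) ∂sphμ)
                * ENNReal.ofReal (‖h ξ‖ ^ 2))
            + ∫⁻ ξ : E3, ENNReal.ofReal (‖h ξ‖ ^ 2)) := by
  subst hψ₀
  obtain ⟨T, hT, C, hC, hle⟩ := time_degenerate_coercivity_general s K hs0 hK b hb_meas hb_nonneg
    hb_sing F₀ hnotdirac ψ hψ
  exact ⟨T, hT, C, hC, fun t ht h hh _ => hle t ht h hh⟩
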